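/- Let 0 < r ≤ 1 ≤ R, ε > 0, and let λ be one of the four phases λ_{ε₁,ε₂}. For any q ∈ [2, ∞] and q̄ ∈ [1, 2] with 1/q + 1/q̄ = 1, there exists a constant C > 0, depending only on γ̄ and ψ, such that for every t > 0 and every f ∈ L^{q̄}(ℝ³), ‖Ψ_{r,R}(D) G_λ(t) f‖_{L^q(ℝ³)} ≤ C [R³ min{1, r^{−2} (ε/t)^{1/2}}]^{1 − 2/q} ‖f‖_{L^{q̄}(ℝ³)}. -/

import Mathlib

/- Common setup: the space ℝ³ (as a Euclidean space), Fourier transform,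
   partial derivatives, Sobolev-type norms. -/

noncomputable section

open MeasureTheory Real Complex Filter ENNReal

/-- The space `ℝ³`. -/
abbrev E3 : Type := EuclideanSpace ℝ (Fin 3)

/-- Fourier transform on `ℝ³`. -/
def FT (f : E3 → ℂ) : E3 → ℂ := FourierTransform.fourier f

/-- Inverse Fourier transform on `ℝ³`. -/
def FTinv (f : E3 → ℂ) : E3 → ℂ := FourierTransformInv.fourierInv f

/-- The point `(x₁, x₂, x₃) ∈ ℝ³`. -/
def pt (x1 x2 x3 : ℝ) : E3 := (EuclideanSpace.equiv (Fin 3) ℝ).symm ![x1, x2, x3]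

/-- Fourier transform of a real-valued function. -/
def FTr (f : E3 → ℝ) : E3 → ℂ := FT (fun x => (f x : ℂ))

/-- Partial derivative `∂ᵢ` of a real-valued function. -/
def pd (i : Fin 3) (f : E3 → ℝ) (x : E3) : ℝ := fderiv ℝ f x (EuclideanSpace.single i 1)

/-- Partial derivative `∂ᵢ` of a complex-valued function. -/
def pdC (i : Fin 3) (f : E3 → ℂ) (x : E3) : ℂ := fderiv ℝ f x (EuclideanSpace.single i 1)

/-- A smooth cut-off function `ψ` with values in `[0,1]`, equal to `1` on `(-∞,1]`
and to `0` on `[2,∞)`. -/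
def IsCutoff (ψ : ℝ → ℝ) : Prop :=
  ContDiff ℝ (⊤ : ℕ∞) ψ ∧ (∀ x, ψ x ∈ Set.Icc (0:ℝ) 1) ∧ (∀ x ≤ (1:ℝ), ψ x = 1) ∧
    (∀ x, (2:ℝ) ≤ x → ψ x = 0)

/-- The norm `|ξ_h|` of the horizontal component of a frequency `ξ`. -/
def xih (ξ : E3) : ℝ := Real.sqrt (ξ 0 ^ 2 + ξ 1 ^ 2)

/-- The frequency cut-off function `Ψ_{r,R}`. -/
def Psi (ψ : ℝ → ℝ) (r R : ℝ) (ξ : E3) : ℝ :=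
  ψ (‖ξ‖ / R) * ((1 - ψ (xih ξ / r)) * (1 - ψ (|ξ 2| / r)))

/-- The set `C_{r,R} = {ξ : |ξ| ≤ R, |ξ_h| ≥ r, |ξ₃| ≥ r}`. -/
def CrR (r R : ℝ) : Set E3 := {ξ | ‖ξ‖ ≤ R ∧ r ≤ xih ξ ∧ r ≤ |ξ 2|}

/-- The frequency cut-off operator `Ψ_{r,R}(D) g = 𝓕⁻¹(Ψ_{r,R} ĝ)`. -/
def PsiD (ψ : ℝ → ℝ) (r R : ℝ) (g : E3 → ℂ) : E3 → ℂ :=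
  FTinv (fun ξ => (Psi ψ r R ξ : ℂ) * FT g ξ)

/-- The eigenvalues `λ_{ε₁,ε₂}(ξ)` of `B̂(ξ)`. -/
def lamEV (γ ε1 ε2 : ℝ) (ξ : E3) : ℂ :=
  (ε1 : ℂ) * (Complex.I / 2) *
    (((Real.sqrt (1 + γ ^ 2 * ‖ξ‖ ^ 2 + 2 * γ * ξ 2) +
      ε2 * Real.sqrt (1 + γ ^ 2 * ‖ξ‖ ^ 2 - 2 * γ * ξ 2)) : ℝ) : ℂ)

/-- The cut-off scalar propagator `Ψ_{r,R}(D) G_λ(t) f = 𝓕⁻¹(Ψ_{r,R}(ξ) e^{(t/ε)λ(ξ)} f̂(ξ))`. -/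
def PsiG (ψ : ℝ → ℝ) (r R γ ε1 ε2 ε t : ℝ) (f : E3 → ℂ) : E3 → ℂ :=
  FTinv (fun ξ => ((Psi ψ r R ξ : ℝ) : ℂ) *
    Complex.exp (((t / ε : ℝ) : ℂ) * lamEV γ ε1 ε2 ξ) * FT f ξ)

/-!
The operator `Ψ_{r,R}(D) G_λ(t)` is convolution with the inverse Fourier transform of a bounded
symbol. By Plancherel it is bounded on `L²`, so by interpolation it suffices to bound the kernel.
The support of the symbol has volume `O(R³)`, which gives the bound `O(R³)`. For the decay in time,
rotate around the `ξ₃`-axis, which leaves the symbol invariant, until the second coordinate of `x`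
vanishes; then only the phase of the propagator oscillates in the variable `ξ₂`. On a line in that
direction the phase is `τ/2` times `√(A + γ²ξ₂²) ± √(B + γ²ξ₂²)` with `A - B = 4γξ₃`: its only
critical point is `ξ₂ = 0`, and its derivative is at least of size `τ |ξ₃| |ξ₂|` there. Integrating
by parts away from the stationary point bounds the integral over the line by `(τ |ξ₃|)^(-1/2)`,
uniformly in `r` and `R`: the arguments of the cutoffs are monotone in `|ξ₂|`, so the cutoffs
contribute only the total variation of `ψ`. The singularity `|ξ₃|^(-1/2)` is integrable, so no power
of `r` is lost.

For the interpolation between `L¹ → L^∞` and `L² → L²`, at each height `s` the values of `f` above a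
threshold depending on `s` are split off, so that their image is at most `s` in `L^∞`. The rest of
`f` is estimated in `L²`, and the layer-cake formula sums these estimates over `s`.
-/

open scoped NNReal FourierTransform

section Interpolation

variable {α β E F : Type*} [MeasurableSpace α] [MeasurableSpace β] [NormedAddCommGroup E]
  [NormedAddCommGroup F] {μ : Measure α} {ν : Measure β}

lemma lintegral_rpow_mul_le_of_setLIntegral_le {g : β → ℝ} {h : α → ℝ} {w : β → ℝ≥0∞}
    {v : α → ℝ≥0∞} {c : ℝ≥0∞} {κ : ℝ} (hκ : 0 < κ) (hc : c ≠ ∞) (hg : AEMeasurable g ν)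
    (hg₀ : ∀ x, 0 ≤ g x) (hh : AEMeasurable h μ) (hh₀ : ∀ x, 0 ≤ h x) (hw : AEMeasurable w ν)
    (hv : AEMeasurable v μ)
    (hle : ∀ s, 0 < s → ∫⁻ x in {x | s < g x}, w x ∂ν ≤ c * ∫⁻ x in {x | s ≤ h x}, v x ∂μ) :
    ∫⁻ x, w x * ENNReal.ofReal (g x ^ κ) ∂ν ≤ c * ∫⁻ x, v x * ENNReal.ofReal (h x ^ κ) ∂μ := by
  have layer_w : ∫⁻ x, w x * ENNReal.ofReal (g x ^ κ) ∂ν = ENNReal.ofReal κ *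
      ∫⁻ s in Set.Ioi 0, (∫⁻ x in {x | s < g x}, w x ∂ν) * ENNReal.ofReal (s ^ (κ - 1)) := by
    have change := lintegral_withDensity_eq_lintegral_mul₀ hw (hg.pow_const κ).ennreal_ofReal
    simp only [Pi.mul_apply] at change
    rw [← change, lintegral_rpow_eq_lintegral_meas_lt_mul _ (ae_of_all _ hg₀)
        (hg.mono_ac (withDensity_absolutelyContinuous ν w)) hκ]
    simp_rw [withDensity_apply₀ w (nullMeasurableSet_lt aemeasurable_const hg)]
  have layer_v : ∫⁻ x, v x * ENNReal.ofReal (h x ^ κ) ∂μ = ENNReal.ofReal κ *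
      ∫⁻ s in Set.Ioi 0, (∫⁻ x in {x | s ≤ h x}, v x ∂μ) * ENNReal.ofReal (s ^ (κ - 1)) := by
    have change := lintegral_withDensity_eq_lintegral_mul₀ hv (hh.pow_const κ).ennreal_ofReal
    simp only [Pi.mul_apply] at change
    rw [← change, lintegral_rpow_eq_lintegral_meas_le_mul _ (ae_of_all _ hh₀)
        (hh.mono_ac (withDensity_absolutelyContinuous μ v)) hκ]
    simp_rw [withDensity_apply₀ v (nullMeasurableSet_le aemeasurable_const hh)]
  rw [layer_w, layer_v, mul_left_comm, ← lintegral_const_mul' _ _ hc]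
  gcongr ENNReal.ofReal κ * ?_
  refine setLIntegral_mono' measurableSet_Ioi fun s hs ↦ ?_
  rw [← mul_assoc]
  gcongr
  exact hle s hs

/-- Boundedness of a subadditive operator `T`, defined on integrable functions, at the two
endpoints `L¹ → L^∞` and `L² → L²` of the interpolation scale, with constants `M₁` and `M₂`. -/
structure IsEndpointBounded (T : (α → E) → β → F) (μ : Measure α) (ν : Measure β)
    (M₁ M₂ : ℝ≥0) : Prop where
  aestronglyMeasurable : ∀ f, Integrable f μ → AEStronglyMeasurable (T f) ν
  enorm_add_le : ∀ f g, Integrable f μ → Integrable g μ →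
    ∀ x, ‖T (f + g) x‖ₑ ≤ ‖T f x‖ₑ + ‖T g x‖ₑ
  eLpNorm_top_le : ∀ f, Integrable f μ → eLpNorm (T f) ∞ ν ≤ M₁ * eLpNorm f 1 μ
  eLpNorm_two_le : ∀ f, Integrable f μ → eLpNorm (T f) 2 ν ≤ M₂ * eLpNorm f 2 μ

variable {T : (α → E) → β → F} {M₁ M₂ : ℝ≥0} {f : α → E} {p q s : ℝ}

lemma eLpNorm_two_sq (f : α → E) : eLpNorm f 2 μ ^ 2 = ∫⁻ x, ‖f x‖ₑ ^ 2 ∂μ := by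
  have := eLpNorm_nnreal_pow_eq_lintegral (f := f) (μ := μ) (two_ne_zero (α := ℝ≥0))
  simp only [NNReal.coe_ofNat, coe_ofNat, ENNReal.rpow_ofNat] at this
  exact this

lemma eLpNorm_rpow_toReal {p : ℝ} (hp : 0 < p) (f : α → E) :
    eLpNorm f (ENNReal.ofReal p) μ ^ p = ∫⁻ x, ENNReal.ofReal (‖f x‖ ^ p) ∂μ := by
  lift p to ℝ≥0 using hp.le
  rw [ofReal_coe_nnreal, eLpNorm_nnreal_pow_eq_lintegral (by exact_mod_cast hp.ne')]
  refine lintegral_congr fun x ↦ ?_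
  rw [← ENNReal.ofReal_rpow_of_nonneg (norm_nonneg _) hp.le, ofReal_norm]

lemma IsEndpointBounded.ae_enorm_le (hT : IsEndpointBounded T μ ν M₁ M₂) (hf : Integrable f μ) :
    ∀ᵐ x ∂ν, ‖T f x‖ₑ ≤ M₁ * ∫⁻ x, ‖f x‖ₑ ∂μ := by
  filter_upwards [ae_le_eLpNormEssSup (f := T f) (μ := ν)] with x hx
  rw [← eLpNorm_exponent_top] at hx
  exact eLpNorm_one_eq_lintegral_enorm (f := f) (μ := μ) ▸ hx.trans (hT.eLpNorm_top_le f hf)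

/-- On `{2s < ‖T f‖}` the part of `f` outside `S` contributes at most `s`, hence at most half. -/
lemma IsEndpointBounded.ae_enorm_sq_le (hT : IsEndpointBounded T μ ν M₁ M₂)
    (hf : Integrable f μ) (hs₀ : 0 ≤ s) {S : Set α} (hS : NullMeasurableSet S μ)
    (hs : M₁ * ∫⁻ x in Sᶜ, ‖f x‖ₑ ∂μ ≤ ENNReal.ofReal s) :
    ∀ᵐ x ∂ν, s < ‖T f x‖ / 2 → ‖T f x‖ₑ ^ 2 ≤ 4 * ‖T (S.indicator f) x‖ₑ ^ 2 := by
  have int_out : Integrable (Sᶜ.indicator f) μ := hf.indicator₀ hS.compl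
  filter_upwards [hT.ae_enorm_le int_out] with x hx hlt
  simp_rw [enorm_indicator_eq_indicator_enorm, lintegral_indicator₀ hS.compl] at hx
  have out_le := hx.trans hs
  have split := hT.enorm_add_le _ _ (hf.indicator₀ hS) int_out x
  rw [Set.indicator_self_add_compl] at split
  have half : ‖T f x‖ ≤ 2 * ‖T (S.indicator f) x‖ := by
    simp only [← ofReal_norm] at split out_le
    rw [← ENNReal.ofReal_add (norm_nonneg _) (norm_nonneg _),
      ENNReal.ofReal_le_ofReal_iff (by positivity)] at split
    rw [ENNReal.ofReal_le_ofReal_iff hs₀] at out_le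
    linarith
  calc ‖T f x‖ₑ ^ 2 ≤ (2 * ‖T (S.indicator f) x‖ₑ) ^ 2 := by
        gcongr
        simpa only [← ofReal_norm, ENNReal.ofReal_mul zero_le_two, ENNReal.ofReal_ofNat] using
          ENNReal.ofReal_le_ofReal half
    _ = 4 * ‖T (S.indicator f) x‖ₑ ^ 2 := by rw [mul_pow]; norm_num

lemma IsEndpointBounded.setLIntegral_sq_le (hT : IsEndpointBounded T μ ν M₁ M₂)
    (hf : Integrable f μ) (hs₀ : 0 ≤ s) {S : Set α} (hS : NullMeasurableSet S μ)
    (hs : M₁ * ∫⁻ x in Sᶜ, ‖f x‖ₑ ∂μ ≤ ENNReal.ofReal s) :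
    ∫⁻ x in {x | s < ‖T f x‖ / 2}, ‖T f x‖ₑ ^ 2 ∂ν ≤
      4 * M₂ ^ 2 * ∫⁻ x in S, ‖f x‖ₑ ^ 2 ∂μ := by
  have norm_in : ∫⁻ x, ‖S.indicator f x‖ₑ ^ 2 ∂μ = ∫⁻ x in S, ‖f x‖ₑ ^ 2 ∂μ := by
    rw [← lintegral_indicator₀ hS]
    refine lintegral_congr fun x ↦ ?_
    by_cases hx : x ∈ S <;> simp [hx]
  have meas : NullMeasurableSet {x | s < ‖T f x‖ / 2} ν :=
    nullMeasurableSet_lt aemeasurable_const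
      ((hT.aestronglyMeasurable f hf).norm.aemeasurable.div_const 2)
  calc ∫⁻ x in {x | s < ‖T f x‖ / 2}, ‖T f x‖ₑ ^ 2 ∂ν
      ≤ ∫⁻ x in {x | s < ‖T f x‖ / 2}, 4 * ‖T (S.indicator f) x‖ₑ ^ 2 ∂ν :=
        lintegral_mono_ae ((ae_restrict_iff'₀ meas).2 (hT.ae_enorm_sq_le hf hs₀ hS hs))
    _ ≤ ∫⁻ x, 4 * ‖T (S.indicator f) x‖ₑ ^ 2 ∂ν := setLIntegral_le_lintegral _ _
    _ = 4 * eLpNorm (T (S.indicator f)) 2 ν ^ 2 := by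
        rw [lintegral_const_mul' _ _ (by norm_num), eLpNorm_two_sq]
    _ ≤ 4 * (M₂ * eLpNorm (S.indicator f) 2 μ) ^ 2 := by
        gcongr
        exact hT.eLpNorm_two_le _ (hf.indicator₀ hS)
    _ = 4 * M₂ ^ 2 * ∫⁻ x in S, ‖f x‖ₑ ^ 2 ∂μ := by
        rw [mul_pow, eLpNorm_two_sq, norm_in, mul_assoc]

lemma mul_setIntegral_norm_le {a : ℝ} {S : Set α} (hp : p ≠ 0) (hs : 0 ≤ s) (hf : Integrable f μ)
    (hfp : Integrable (fun x ↦ ‖f x‖ ^ p) μ) (hS : NullMeasurableSet S μ)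
    (hle : ∀ x ∈ S, a * (∫ y, ‖f y‖ ^ p ∂μ) * ‖f x‖ ≤ s * ‖f x‖ ^ p) :
    a * ∫ x in S, ‖f x‖ ∂μ ≤ s := by
  set N := ∫ x, ‖f x‖ ^ p ∂μ
  have hN₀ : 0 ≤ N := integral_nonneg fun x ↦ by positivity
  rcases hN₀.eq_or_lt with hN' | hN'
  · have norm_eq_zero : ∀ᵐ x ∂μ, ‖f x‖ = 0 := by
      filter_upwards [(integral_eq_zero_iff_of_nonneg (fun x ↦ by positivity) hfp).1 hN'.symm]
        with x hx using (Real.rpow_eq_zero (norm_nonneg _) hp).1 hx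
    rwa [integral_eq_zero_of_ae (ae_restrict_of_ae norm_eq_zero), mul_zero]
  refine le_of_mul_le_mul_right ?_ hN'
  calc a * (∫ x in S, ‖f x‖ ∂μ) * N = ∫ x in S, a * N * ‖f x‖ ∂μ := by
        rw [integral_const_mul]; ring
    _ ≤ ∫ x in S, s * ‖f x‖ ^ p ∂μ :=
        integral_mono_ae (hf.norm.integrableOn.const_mul _) (hfp.integrableOn.const_mul _)
          ((ae_restrict_iff'₀ hS).2 (ae_of_all _ hle))
    _ ≤ s * N := by
        rw [integral_const_mul]
        gcongr
        exact setIntegral_le_integral hfp (ae_of_all _ fun x ↦ by positivity)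

lemma mul_setLIntegral_compl_le (M₁ : ℝ≥0) (hp : p ≠ 0) (hs : 0 ≤ s) (hf : Integrable f μ)
    (hfp : Integrable (fun x ↦ ‖f x‖ ^ p) μ) :
    M₁ * ∫⁻ x in {x | s ≤ M₁ * (∫ y, ‖f y‖ ^ p ∂μ) * ‖f x‖ ^ (1 - p)}ᶜ, ‖f x‖ₑ ∂μ ≤
      ENNReal.ofReal s := by
  have real_bound := mul_setIntegral_norm_le (a := M₁)
    (S := {x | s ≤ M₁ * (∫ y, ‖f y‖ ^ p ∂μ) * ‖f x‖ ^ (1 - p)}ᶜ) hp hs hf hfp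
    (nullMeasurableSet_le aemeasurable_const
      ((hf.norm.aemeasurable.pow_const _).const_mul _)).compl fun x hx ↦ by
    rcases (norm_nonneg (f x)).eq_or_lt with h | h
    · rw [← h, Real.zero_rpow hp, mul_zero, mul_zero]
    · calc M₁ * (∫ y, ‖f y‖ ^ p ∂μ) * ‖f x‖
          = M₁ * (∫ y, ‖f y‖ ^ p ∂μ) * ‖f x‖ ^ (1 - p) * ‖f x‖ ^ p := by
            rw [mul_assoc _ (_ ^ _), ← Real.rpow_add h, sub_add_cancel, Real.rpow_one]
        _ ≤ s * ‖f x‖ ^ p := by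
            gcongr
            exact (not_le.1 (Set.notMem_ofPred_iff.1 hx)).le
  simp_rw [← ofReal_norm]
  rw [← ofReal_integral_eq_lintegral_ofReal hf.norm.integrableOn
      (ae_of_all _ fun x ↦ norm_nonneg _), ← ENNReal.ofReal_coe_nnreal,
    ← ENNReal.ofReal_mul M₁.coe_nonneg]
  exact ENNReal.ofReal_le_ofReal real_bound

lemma enorm_sq_mul_ofReal_rpow (z : E) {a c κ : ℝ} (hc : 0 ≤ c) (ha : 2 + a * κ ≠ 0) :
    ‖z‖ₑ ^ 2 * ENNReal.ofReal ((c * ‖z‖ ^ a) ^ κ) =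
      ENNReal.ofReal (c ^ κ) * ENNReal.ofReal (‖z‖ ^ (2 + a * κ)) := by
  rw [← ofReal_norm, ← ENNReal.ofReal_pow (norm_nonneg _), ← ENNReal.ofReal_mul (by positivity),
    ← ENNReal.ofReal_mul (by positivity), Real.mul_rpow hc (by positivity),
    ← Real.rpow_mul (norm_nonneg _), mul_left_comm, Real.rpow_add' (norm_nonneg _) ha,
    Real.rpow_two]

lemma IsEndpointBounded.mul_lintegral_rpow_le (hT : IsEndpointBounded T μ ν M₁ M₂)
    (hpq : p.HolderConjugate q) (hq : 2 < q) (hf : Integrable f μ)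
    (hfp : Integrable (fun x ↦ ‖f x‖ ^ p) μ) :
    ENNReal.ofReal (2⁻¹ ^ (q - 2)) * ∫⁻ x, ENNReal.ofReal (‖T f x‖ ^ q) ∂ν ≤
      4 * M₂ ^ 2 * (ENNReal.ofReal ((M₁ * ∫ x, ‖f x‖ ^ p ∂μ) ^ (q - 2)) *
        ENNReal.ofReal (∫ x, ‖f x‖ ^ p ∂μ)) := by
  set N := ∫ x, ‖f x‖ ^ p ∂μ
  have hTf := (hT.aestronglyMeasurable f hf).norm.aemeasurable
  have hh : AEMeasurable (fun x ↦ M₁ * N * ‖f x‖ ^ (1 - p)) μ :=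
    (hf.norm.aemeasurable.pow_const _).const_mul _
  have layer := lintegral_rpow_mul_le_of_setLIntegral_le (μ := μ) (ν := ν)
    (w := fun x ↦ ‖T f x‖ₑ ^ 2) (v := fun x ↦ ‖f x‖ₑ ^ 2) (c := 4 * M₂ ^ 2)
    (sub_pos.2 hq) (by finiteness) (hTf.div_const 2) (fun x ↦ by positivity) hh
    (fun x ↦ by positivity) ((hT.aestronglyMeasurable f hf).enorm.pow_const 2)
    (hf.1.enorm.pow_const 2) fun s hs ↦ hT.setLIntegral_sq_le hf hs.le
      (nullMeasurableSet_le aemeasurable_const hh)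
      (mul_setLIntegral_compl_le M₁ hpq.ne_zero hs.le hf hfp)
  have left (x) : ‖T f x‖ₑ ^ 2 * ENNReal.ofReal ((‖T f x‖ / 2) ^ (q - 2)) =
      ENNReal.ofReal (2⁻¹ ^ (q - 2)) * ENNReal.ofReal (‖T f x‖ ^ q) := by
    simpa [inv_mul_eq_div] using enorm_sq_mul_ofReal_rpow (T f x) (a := 1) (c := 2⁻¹) (κ := q - 2)
      (by positivity) (by simpa using hpq.symm.ne_zero)
  have right (x) : ‖f x‖ₑ ^ 2 * ENNReal.ofReal ((M₁ * N * ‖f x‖ ^ (1 - p)) ^ (q - 2)) =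
      ENNReal.ofReal ((M₁ * N) ^ (q - 2)) * ENNReal.ofReal (‖f x‖ ^ p) := by
    have exponent : 2 + (1 - p) * (q - 2) = p := by linarith [hpq.mul_eq_add]
    rw [enorm_sq_mul_ofReal_rpow _ (by positivity) (exponent.trans_ne hpq.ne_zero), exponent]
  simp_rw [left, right] at layer
  rwa [lintegral_const_mul' _ _ ofReal_ne_top, lintegral_const_mul' _ _ ofReal_ne_top,
    ← ofReal_integral_eq_lintegral_ofReal hfp (ae_of_all _ fun x ↦ by positivity)] at layer

lemma IsEndpointBounded.lintegral_rpow_le (hT : IsEndpointBounded T μ ν M₁ M₂)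
    (hpq : p.HolderConjugate q) (hq : 2 < q) (hf : Integrable f μ)
    (hfp : Integrable (fun x ↦ ‖f x‖ ^ p) μ) :
    ∫⁻ x, ENNReal.ofReal (‖T f x‖ ^ q) ∂ν ≤
      ENNReal.ofReal (2 ^ q * M₂ ^ 2 * M₁ ^ (q - 2) * (∫ x, ‖f x‖ ^ p ∂μ) ^ (q - 1)) := by
  have bound := hT.mul_lintegral_rpow_le hpq hq hf hfp
  set N := ∫ x, ‖f x‖ ^ p ∂μ with hN
  have hN₀ : 0 ≤ N := integral_nonneg fun x ↦ by positivity
  rw [Real.inv_rpow zero_le_two, ENNReal.ofReal_inv_of_pos (by positivity), mul_comm _⁻¹,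
    ← div_eq_mul_inv, ENNReal.div_le_iff (by positivity) ofReal_ne_top] at bound
  refine bound.trans_eq ?_
  have four : (4 * M₂ ^ 2 : ℝ≥0∞) = ENNReal.ofReal (2 ^ 2 * M₂ ^ 2) := by
    rw [ENNReal.ofReal_mul (by positivity), ENNReal.ofReal_pow M₂.coe_nonneg,
      ENNReal.ofReal_coe_nnreal]
    norm_num
  have two_rpow : (2 : ℝ) ^ q = 2 ^ 2 * 2 ^ (q - 2) := by
    rw [← Real.rpow_two, ← Real.rpow_add zero_lt_two, add_sub_cancel]
  have N_rpow : N ^ (q - 1) = N ^ (q - 2) * N := by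
    rw [← Real.rpow_add_one' hN₀ (by linarith), sub_add]
    norm_num
  rw [four, ← ENNReal.ofReal_mul (by positivity), ← ENNReal.ofReal_mul (by positivity),
    ← ENNReal.ofReal_mul (by positivity), Real.mul_rpow M₁.coe_nonneg hN₀, two_rpow, N_rpow]
  congr 1
  ring

lemma IsEndpointBounded.eLpNorm_ofReal_le (hT : IsEndpointBounded T μ ν M₁ M₂)
    (hpq : p.HolderConjugate q) (hq : 2 < q) (hf : Integrable f μ)
    (hfp : MemLp f (ENNReal.ofReal p) μ) :
    eLpNorm (T f) (ENNReal.ofReal q) ν ≤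
      (2 * M₁ ^ (1 - 2 / q) * M₂ ^ (2 / q) : ℝ≥0) * eLpNorm f (ENNReal.ofReal p) μ := by
  have hp := hpq.pos
  have hq₀ := hpq.symm.pos
  have int_pow : Integrable (fun x ↦ ‖f x‖ ^ p) μ := by
    simpa only [ENNReal.toReal_ofReal hp.le] using
      hfp.integrable_norm_rpow (ENNReal.ofReal_pos.2 hp).ne' ofReal_ne_top
  obtain ⟨b, hb⟩ : ∃ b : ℝ≥0, eLpNorm f (ENNReal.ofReal p) μ = b :=
    ⟨_, (ENNReal.coe_toNNReal hfp.2.ne).symm⟩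
  have integral_eq : ∫ x, ‖f x‖ ^ p ∂μ = b ^ p := by
    have := eLpNorm_rpow_toReal hp f (μ := μ)
    rw [← ofReal_integral_eq_lintegral_ofReal int_pow (ae_of_all _ fun x ↦ by positivity), hb,
      ← ENNReal.ofReal_coe_nnreal, ENNReal.ofReal_rpow_of_nonneg b.coe_nonneg hp.le] at this
    exact ((ENNReal.ofReal_eq_ofReal_iff (by positivity) (by positivity)).1 this).symm
  have exponent : p * (q - 1) = q := by linarith [hpq.mul_eq_add]
  have root : (2 : ℝ) ^ q * M₂ ^ 2 * M₁ ^ (q - 2) * (b ^ p) ^ (q - 1) =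
      (2 * M₁ ^ (1 - 2 / q) * M₂ ^ (2 / q) * b) ^ q := by
    rw [Real.mul_rpow (by positivity) (by positivity),
      Real.mul_rpow (by positivity) (by positivity), Real.mul_rpow (by positivity) (by positivity),
      ← Real.rpow_mul (by positivity), ← Real.rpow_mul (by positivity),
      ← Real.rpow_mul (by positivity), exponent, sub_mul, one_mul,
      div_mul_cancel₀ _ hq₀.ne', Real.rpow_two]
    ring
  rw [← ENNReal.rpow_le_rpow_iff hq₀, eLpNorm_rpow_toReal hq₀, hb]
  refine (hT.lintegral_rpow_le hpq hq hf int_pow).trans_eq ?_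
  rw [integral_eq, root, ← ENNReal.ofReal_rpow_of_nonneg (by positivity) hq₀.le, ← ENNReal.coe_mul]
  exact congrArg (· ^ q)
    (ENNReal.ofReal_coe_nnreal (p := 2 * M₁ ^ (1 - 2 / q) * M₂ ^ (2 / q) * b))

theorem IsEndpointBounded.eLpNorm_le (hT : IsEndpointBounded T μ ν M₁ M₂) {p q : ℝ≥0∞}
    (hpq : p.HolderConjugate q) (hq : 2 ≤ q) (hf : Integrable f μ) (hfp : MemLp f p μ) :
    eLpNorm (T f) q ν ≤
      (2 * M₁ ^ (1 - 2 / q.toReal) * M₂ ^ (2 / q.toReal) : ℝ≥0) * eLpNorm f p μ := by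
  have := hpq.symm
  rcases eq_or_ne q ∞ with rfl | hq_top
  · obtain rfl : p = 1 := (ENNReal.HolderConjugate.eq_top_iff_eq_one ∞ p).1 rfl
    have const : 2 * M₁ ^ (1 - 2 / (∞ : ℝ≥0∞).toReal) * M₂ ^ (2 / (∞ : ℝ≥0∞).toReal) = M₁ + M₁ := by
      simp [two_mul]
    rw [const]
    refine (hT.eLpNorm_top_le f hf).trans ?_
    gcongr
    exact le_self_add
  rcases hq.eq_or_lt with rfl | hq_lt
  · obtain rfl : p = 2 := ENNReal.HolderConjugate.unique 2 p 2
    have const : 2 * M₁ ^ (1 - 2 / (2 : ℝ≥0∞).toReal) * M₂ ^ (2 / (2 : ℝ≥0∞).toReal) = M₂ + M₂ := by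
      simp [two_mul]
    rw [const]
    refine (hT.eLpNorm_two_le f hf).trans ?_
    gcongr
    exact le_self_add
  · have hp_top : p ≠ ∞ := (ENNReal.HolderConjugate.ne_top_iff_ne_one p q).2
      (ENNReal.one_lt_two.trans hq_lt).ne'
    have conj := ENNReal.HolderConjugate.toReal_of_ne_top hp_top hq_top
    have := hT.eLpNorm_ofReal_le conj
      (by simpa using (toReal_lt_toReal ofNat_ne_top hq_top).2 hq_lt) hf
      (by rwa [ENNReal.ofReal_toReal hp_top])
    rwa [ENNReal.ofReal_toReal hp_top, ENNReal.ofReal_toReal hq_top] at this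

end Interpolation

section Multiplier

variable {V F H : Type*} [NormedAddCommGroup V] [InnerProductSpace ℝ V] [FiniteDimensional ℝ V]
  [MeasurableSpace V] [BorelSpace V] [NormedAddCommGroup F] [NormedSpace ℂ F]
  [NormedAddCommGroup H] [InnerProductSpace ℂ H] [CompleteSpace H]
  {f : V → F} {h : V → H} {m : V → ℂ} {M₁ M₂ : ℝ≥0}

lemma continuous_fourier_of_integrable (hf : Integrable f) : Continuous (𝓕 f) :=
  VectorFourier.fourierIntegral_continuous Real.continuous_fourierChar
    (L := innerₗ V) (by exact continuous_inner) hf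

lemma continuous_fourierInv_of_integrable (hf : Integrable f) : Continuous (𝓕⁻ f) := by
  rw [funext (Real.fourierInv_eq_fourier_neg f)]
  exact (continuous_fourier_of_integrable hf).comp continuous_neg

lemma fourier_eq_zero_of_not_integrable (hf : ¬ Integrable f) : 𝓕 f = 0 := by
  funext ξ
  rw [Real.fourier_eq, Pi.zero_apply]
  exact integral_undef fun h ↦ hf ((Real.fourierIntegral_convergent_iff ξ).1 h)

lemma integrable_fourierChar_smul (hf : Integrable f) (x : V) :
    Integrable fun ξ ↦ Real.fourierChar (inner ℝ ξ x) • f ξ := by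
  simpa [inner_neg_right] using (Real.fourierIntegral_convergent_iff (-x)).2 hf

lemma norm_fourier_le_integral_norm (f : V → F) (ξ : V) : ‖𝓕 f ξ‖ ≤ ∫ x, ‖f x‖ :=
  VectorFourier.norm_fourierIntegral_le_integral_norm Real.fourierChar volume (innerₗ V) f ξ

lemma fourier_add_of_integrable {g : V → F} (hf : Integrable f) (hg : Integrable g) :
    𝓕 (f + g) = 𝓕 f + 𝓕 g := by
  have hL : Continuous fun p : V × V ↦ innerₗ V p.1 p.2 := continuous_inner
  exact VectorFourier.fourierIntegral_add Real.continuous_fourierChar hL hf hg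

lemma fourierInv_add_of_integrable {g : V → F} (hf : Integrable f) (hg : Integrable g) :
    𝓕⁻ (f + g) = 𝓕⁻ f + 𝓕⁻ g := by
  funext x
  simp only [Pi.add_apply, Real.fourierInv_eq_fourier_neg, fourier_add_of_integrable hf hg]

lemma integral_fourier_smul_eq [CompleteSpace F] {g : V → ℂ} (hg : Integrable g)
    (hf : Integrable f) : ∫ ξ, 𝓕 g ξ • f ξ = ∫ x, g x • 𝓕 f x := by
  have := VectorFourier.integral_fourierIntegral_smul_eq_flip (L := innerₗ V)
    Real.continuous_fourierChar (by exact continuous_inner) hg hf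
  rwa [flip_innerₗ] at this

lemma coeFn_fourier_toLp (hh : Integrable h) (hh₂ : MemLp h 2) :
    (𝓕 (hh₂.toLp h) : Lp (α := V) H 2) =ᵐ[volume] 𝓕 h := by
  refine ae_eq_of_integral_contDiff_smul_eq ((Lp.memLp _).locallyIntegrable one_le_two)
    (continuous_fourier_of_integrable hh).locallyIntegrable fun g hg hg_supp ↦ ?_
  have supp : HasCompactSupport (Complex.ofRealCLM ∘ g) := hg_supp.comp_left rfl
  have smooth : ContDiff ℝ (⊤ : ℕ∞) (Complex.ofRealCLM ∘ g) := by fun_prop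
  let G : SchwartzMap V ℂ := supp.toSchwartzMap smooth
  have tempered := congrArg (fun S ↦ S G) (Lp.fourier_toTemperedDistribution_eq (hh₂.toLp h))
  simp only [TemperedDistribution.fourier_apply, Lp.toTemperedDistribution_apply] at tempered
  have coe_smul (x : V) (z : H) : g x • z = G x • z := (Complex.coe_smul (g x) z).symm
  simp_rw [coe_smul]
  rw [← tempered, ← integral_fourier_smul_eq G.integrable hh]
  refine integral_congr_ae ?_
  filter_upwards [hh₂.coeFn_toLp] with ξ hξ
  rw [hξ, SchwartzMap.fourier_coe]

theorem eLpNorm_two_fourier (hh : Integrable h) (hh₂ : MemLp h 2) :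
    eLpNorm (𝓕 h) 2 volume = eLpNorm h 2 volume := by
  have norm_eq := Lp.norm_fourier_eq (hh₂.toLp h)
  rw [Lp.norm_def, Lp.norm_def,
    ENNReal.toReal_eq_toReal_iff' (Lp.eLpNorm_ne_top _) (Lp.eLpNorm_ne_top _),
    eLpNorm_congr_ae (coeFn_fourier_toLp hh hh₂), eLpNorm_congr_ae hh₂.coeFn_toLp] at norm_eq
  exact norm_eq

theorem eLpNorm_two_fourierInv (hh : Integrable h) (hh₂ : MemLp h 2) :
    eLpNorm (𝓕⁻ h) 2 volume = eLpNorm h 2 volume := by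
  rw [← eLpNorm_two_fourier hh hh₂, funext (Real.fourierInv_eq_fourier_neg h)]
  exact eLpNorm_comp_measurePreserving (continuous_fourier_of_integrable hh).aestronglyMeasurable
    (Measure.measurePreserving_neg volume)

/-- The Fourier multiplier operator `m(D)` with symbol `m`. On functions that are not integrable it
vanishes, because the Fourier integral does. -/
def multiplierOp (m : V → ℂ) (f : V → F) : V → F :=
  𝓕⁻ fun ξ ↦ m ξ • 𝓕 f ξ

lemma multiplierOp_zero (f : V → F) : multiplierOp 0 f = 0 := by
  funext x
  simp [multiplierOp, Real.fourierInv_eq]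

lemma multiplierOp_of_not_integrable (m : V → ℂ) (hf : ¬ Integrable f) : multiplierOp m f = 0 := by
  funext x
  simp [multiplierOp, fourier_eq_zero_of_not_integrable hf, Real.fourierInv_eq]

lemma integrable_smul_fourier (hm : Integrable m) (hf : Integrable f) :
    Integrable fun ξ ↦ m ξ • 𝓕 f ξ :=
  hm.smul_bdd _ (continuous_fourier_of_integrable hf).aestronglyMeasurable
    (ae_of_all _ (norm_fourier_le_integral_norm f))

lemma multiplierOp_add (hm : Integrable m) {g : V → F} (hf : Integrable f) (hg : Integrable g) :
    multiplierOp m (f + g) = multiplierOp m f + multiplierOp m g := by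
  rw [multiplierOp, multiplierOp, multiplierOp,
    ← fourierInv_add_of_integrable (integrable_smul_fourier hm hf) (integrable_smul_fourier hm hg),
    fourier_add_of_integrable hf hg]
  simp only [Pi.add_apply, smul_add, Pi.add_def]

lemma multiplierOp_apply_eq_integral [CompleteSpace F] (hm : Integrable m) (hf : Integrable f)
    (x : V) : multiplierOp m f x = ∫ y, 𝓕⁻ m (x - y) • f y := by
  have int := integrable_fourierChar_smul hm x
  have modulation (y : V) : 𝓕⁻ m (x - y) = 𝓕 (fun ξ ↦ Real.fourierChar (inner ℝ ξ x) • m ξ) y := by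
    rw [Real.fourierInv_eq, Real.fourier_eq]
    refine integral_congr_ae (ae_of_all _ fun ξ ↦ ?_)
    simp only [smul_smul, ← AddChar.map_add_eq_mul, inner_sub_right]
    congr 2
    ring
  simp_rw [modulation, integral_fourier_smul_eq int hf, multiplierOp, Real.fourierInv_eq,
    smul_assoc]

lemma norm_multiplierOp_apply_le [CompleteSpace F] (hm : Integrable m) (hM : ∀ x, ‖𝓕⁻ m x‖ ≤ M₁)
    (hf : Integrable f) (x : V) : ‖multiplierOp m f x‖ ≤ M₁ * ∫ y, ‖f y‖ := by
  rw [multiplierOp_apply_eq_integral hm hf, ← integral_const_mul]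
  refine norm_integral_le_of_norm_le (hf.norm.const_mul _) (ae_of_all _ fun y ↦ ?_)
  rw [norm_smul]
  gcongr
  exact hM _

lemma eLpNorm_two_multiplierOp_le (hm : Integrable m) (hM : ∀ ξ, ‖m ξ‖ ≤ M₂)
    (hh : Integrable h) : eLpNorm (multiplierOp m h) 2 volume ≤ M₂ * eLpNorm h 2 volume := by
  by_cases hh₂ : MemLp h 2
  · have bound : eLpNorm (fun ξ ↦ m ξ • 𝓕 h ξ) 2 volume ≤ M₂ * eLpNorm h 2 volume := by
      rw [← eLpNorm_two_fourier hh hh₂]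
      refine eLpNorm_le_nnreal_smul_eLpNorm_of_ae_le_mul (ae_of_all _ fun ξ ↦ ?_) 2
      rw [nnnorm_smul]
      gcongr
      exact hM ξ
    have int := integrable_smul_fourier hm hh
    rwa [multiplierOp, eLpNorm_two_fourierInv int
      ⟨int.1, bound.trans_lt (ENNReal.mul_lt_top coe_lt_top hh₂.2)⟩]
  · rcases eq_or_ne M₂ 0 with rfl | hM₂
    · have hm₀ : m = 0 := funext fun ξ ↦ by simpa using hM ξ
      simp [multiplierOp_zero, hm₀]
    · have hh_top : eLpNorm h 2 volume = ∞ := by simpa [MemLp, hh.1] using hh₂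
      simp [hh_top, ENNReal.mul_top, hM₂]

theorem isEndpointBounded_multiplierOp (hm : Integrable m)
    (hM₁ : ∀ x, ‖𝓕⁻ m x‖ ≤ M₁) (hM₂ : ∀ ξ, ‖m ξ‖ ≤ M₂) :
    IsEndpointBounded (multiplierOp (F := H) m) volume volume M₁ M₂ where
  aestronglyMeasurable h hh :=
    (continuous_fourierInv_of_integrable (integrable_smul_fourier hm hh)).aestronglyMeasurable
  enorm_add_le h g hh hg x := by
    rw [multiplierOp_add hm hh hg]
    exact enorm_add_le _ _
  eLpNorm_top_le h hh := by
    rw [eLpNorm_exponent_top]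
    refine (eLpNormEssSup_le_of_ae_bound
      (ae_of_all _ (norm_multiplierOp_apply_le hm hM₁ hh))).trans_eq ?_
    rw [ENNReal.ofReal_mul M₁.coe_nonneg, ENNReal.ofReal_coe_nnreal,
      ofReal_integral_norm_eq_lintegral_enorm hh, eLpNorm_one_eq_lintegral_enorm]
  eLpNorm_two_le h hh := eLpNorm_two_multiplierOp_le hm hM₂ hh

theorem eLpNorm_multiplierOp_le (hm : Integrable m) (hM₁ : ∀ x, ‖𝓕⁻ m x‖ ≤ M₁)
    (hM₂ : ∀ ξ, ‖m ξ‖ ≤ M₂) {p q : ℝ≥0∞} (hpq : p.HolderConjugate q) (hq : 2 ≤ q)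
    (hh : MemLp h p) :
    eLpNorm (multiplierOp m h) q volume ≤
      (2 * M₁ ^ (1 - 2 / q.toReal) * M₂ ^ (2 / q.toReal) : ℝ≥0) * eLpNorm h p volume := by
  by_cases hh_int : Integrable h
  · exact (isEndpointBounded_multiplierOp hm hM₁ hM₂).eLpNorm_le hpq hq hh_int hh
  · simp [multiplierOp_of_not_integrable m hh_int]

end Multiplier

section Oscillatory

variable {χ χ' φ g g' : ℝ → ℝ} {a b δ L c V l : ℝ}

lemma norm_integral_mul_deriv_mul_exp_le {u u' φ' : ℝ → ℝ} (hab : a ≤ b)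
    (hu : ∀ y ∈ Set.Icc a b, HasDerivAt u (u' y) y) (hu' : ContinuousOn u' (Set.Icc a b))
    (hφ : ∀ y ∈ Set.Icc a b, HasDerivAt φ (φ' y) y) (hφ' : ContinuousOn φ' (Set.Icc a b)) :
    ‖∫ y in a..b, ((u y * φ' y : ℝ) : ℂ) * Complex.exp (φ y * I)‖ ≤
      |u a| + |u b| + ∫ y in a..b, |u' y| := by
  rw [← Set.uIcc_of_le hab] at hu hu' hφ hφ'
  have phase_cont : ContinuousOn (fun y ↦ Complex.exp (φ y * I)) (Set.uIcc a b) := fun y hy ↦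
    ((hφ y hy).ofReal_comp.mul_const I).cexp.continuousAt.continuousWithinAt
  have phase_deriv (y) (hy : y ∈ Set.uIcc a b) : HasDerivAt (fun y ↦ -I * Complex.exp (φ y * I))
      (φ' y * Complex.exp (φ y * I)) y := by
    refine (((hφ y hy).ofReal_comp.mul_const I).cexp.const_mul (-I)).congr_deriv ?_
    linear_combination -(φ' y : ℂ) * Complex.exp (φ y * I) * I_mul_I
  have by_parts := intervalIntegral.integral_mul_deriv_eq_deriv_mul
    (fun y hy ↦ (hu y hy).ofReal_comp) phase_deriv
    (Complex.continuous_ofReal.comp_continuousOn hu').intervalIntegrable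
    ((Complex.continuous_ofReal.comp_continuousOn hφ').mul phase_cont).intervalIntegrable
  have norm_mul_phase (v y : ℝ) : ‖(v : ℂ) * (-I * Complex.exp (φ y * I))‖ = |v| := by
    simp [Complex.norm_exp_ofReal_mul_I]
  simp_rw [Complex.ofReal_mul, mul_assoc]
  rw [by_parts]
  calc _ ≤ |u b| + |u a| + ∫ y in a..b, |u' y| := by
        refine (norm_sub_le _ _).trans (add_le_add ((norm_sub_le _ _).trans_eq ?_) ?_)
        · rw [norm_mul_phase, norm_mul_phase]
        · refine (intervalIntegral.norm_integral_le_integral_norm hab).trans_eq ?_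
          simp_rw [norm_mul_phase]
    _ = _ := by rw [add_comm |u b|]

lemma integral_inv_sq_le (hδ : 0 < δ) (hL : δ ≤ L) : ∫ y in δ..L, (y ^ 2)⁻¹ ≤ δ⁻¹ := by
  have pos : ∀ y ∈ Set.uIcc δ L, 0 < y := fun y hy ↦ hδ.trans_le (Set.uIcc_of_le hL ▸ hy).1
  rw [intervalIntegral.integral_eq_sub_of_hasDerivAt (f := fun y ↦ -y⁻¹)
    (fun y hy ↦ (hasDerivAt_inv (pos y hy).ne').fun_neg.congr_deriv (neg_neg _))
    ((continuousOn_pow 2).inv₀ fun y hy ↦ (pow_pos (pos y hy) 2).ne').intervalIntegrable]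
  linarith [inv_nonneg.2 (hδ.le.trans hL)]

lemma abs_div_deriv_le {x x' h h' y : ℝ} (hδ : 0 < δ) (hl : 0 < l) (hy : δ ≤ y) (hx : |x| ≤ 1)
    (hlow : l * y ≤ |h|) (hup : y * |h'| ≤ c * |h|) :
    |(x' * h - x * h') / h ^ 2| ≤ (l * δ)⁻¹ * |x'| + c / l * (y ^ 2)⁻¹ := by
  have hy₀ := hδ.trans_le hy
  have hh := (mul_pos hl hy₀).trans_le hlow
  calc |(x' * h - x * h') / h ^ 2| ≤ |x'| / |h| + |x| * (y * |h'|) / (y * |h| * |h|) := by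
        rw [abs_div, abs_pow, div_le_iff₀ (by positivity)]
        refine (abs_sub _ _).trans_eq ?_
        rw [abs_mul, abs_mul]
        field_simp
    _ ≤ |x'| / (l * δ) + 1 * (c * |h|) / (y * (l * y) * |h|) := by
        have low : l * δ ≤ |h| := le_trans (by gcongr) hlow
        have := (by positivity : 0 ≤ y * |h'|).trans hup
        gcongr _ / ?_ + ?_ * ?_ / (_ * ?_ * _)
    _ = _ := by field_simp

lemma integral_abs_div_deriv_le (hδ : 0 < δ) (hL : δ ≤ L) (hl : 0 < l) (hc : 0 ≤ c)
    (hχ : ContinuousOn χ (Set.Icc δ L)) (hχ' : ContinuousOn χ' (Set.Icc δ L))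
    (hχ₁ : ∀ y ∈ Set.Icc δ L, |χ y| ≤ 1) (hV : ∫ y in δ..L, |χ' y| ≤ V)
    (hg : ContinuousOn g (Set.Icc δ L)) (hg' : ContinuousOn g' (Set.Icc δ L))
    (hlow : ∀ y ∈ Set.Icc δ L, l * y ≤ |g y|) (hup : ∀ y ∈ Set.Icc δ L, y * |g' y| ≤ c * |g y|) :
    ContinuousOn (fun y ↦ (χ' y * g y - χ y * g' y) / g y ^ 2) (Set.Icc δ L) ∧
      ∫ y in δ..L, |(χ' y * g y - χ y * g' y) / g y ^ 2| ≤ (c + V) / (l * δ) := by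
  have pos (y) (hy : y ∈ Set.Icc δ L) : 0 < y := hδ.trans_le hy.1
  have cont : ContinuousOn (fun y ↦ (χ' y * g y - χ y * g' y) / g y ^ 2) (Set.Icc δ L) :=
    ((hχ'.mul hg).sub (hχ.mul hg')).div (hg.pow 2) fun y hy ↦
      pow_ne_zero 2 (abs_pos.1 ((mul_pos hl (pos y hy)).trans_le (hlow y hy)))
  have inv_sq_int : IntervalIntegrable (fun y ↦ (y ^ 2)⁻¹) volume δ L :=
    ((continuousOn_pow 2).inv₀ fun y hy ↦ (pow_pos (pos y hy) 2).ne').intervalIntegrable_of_Icc hL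
  have χ'_int := hχ'.abs.intervalIntegrable_of_Icc hL (μ := volume)
  refine ⟨cont, ?_⟩
  calc _ ≤ ∫ y in δ..L, ((l * δ)⁻¹ * |χ' y| + c / l * (y ^ 2)⁻¹) :=
        intervalIntegral.integral_mono_on hL (cont.abs.intervalIntegrable_of_Icc hL)
          ((χ'_int.const_mul _).add (inv_sq_int.const_mul _)) fun y hy ↦
            abs_div_deriv_le hδ hl hy.1 (hχ₁ y hy) (hlow y hy) (hup y hy)
    _ = (l * δ)⁻¹ * (∫ y in δ..L, |χ' y|) + c / l * ∫ y in δ..L, (y ^ 2)⁻¹ := by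
        rw [intervalIntegral.integral_add (χ'_int.const_mul _) (inv_sq_int.const_mul _),
          intervalIntegral.integral_const_mul, intervalIntegral.integral_const_mul]
    _ ≤ (l * δ)⁻¹ * V + c / l * δ⁻¹ := by
        gcongr
        exact integral_inv_sq_le hδ hL
    _ = _ := by field_simp; ring

lemma norm_integral_mul_exp_le_of_mul_le_abs_deriv (hδ : 0 < δ) (hL : δ ≤ L) (hl : 0 < l)
    (hc : 0 ≤ c)
    (hχ : ∀ y ∈ Set.Icc δ L, HasDerivAt χ (χ' y) y) (hχ' : ContinuousOn χ' (Set.Icc δ L))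
    (hχ₁ : ∀ y ∈ Set.Icc δ L, |χ y| ≤ 1) (hV : ∫ y in δ..L, |χ' y| ≤ V)
    (hφ : ∀ y ∈ Set.Icc δ L, HasDerivAt φ (g y) y)
    (hg : ∀ y ∈ Set.Icc δ L, HasDerivAt g (g' y) y) (hg' : ContinuousOn g' (Set.Icc δ L))
    (hlow : ∀ y ∈ Set.Icc δ L, l * y ≤ |g y|) (hup : ∀ y ∈ Set.Icc δ L, y * |g' y| ≤ c * |g y|) :
    ‖∫ y in δ..L, (χ y : ℂ) * Complex.exp (φ y * I)‖ ≤ (2 + c + V) / (l * δ) := by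
  have low (y) (hy : y ∈ Set.Icc δ L) : l * δ ≤ |g y| :=
    le_trans (by gcongr; exact hy.1) (hlow y hy)
  have ne (y) (hy : y ∈ Set.Icc δ L) : g y ≠ 0 :=
    abs_pos.1 ((mul_pos hl hδ).trans_le (low y hy))
  have quotient_le (y) (hy : y ∈ Set.Icc δ L) : |χ y / g y| ≤ 1 / (l * δ) := by
    rw [abs_div]
    exact div_le_div₀ zero_le_one (hχ₁ y hy) (by positivity) (low y hy)
  obtain ⟨deriv_cont, deriv_le⟩ := integral_abs_div_deriv_le hδ hL hl hc
    (HasDerivAt.continuousOn hχ) hχ' hχ₁ hV (HasDerivAt.continuousOn hg) hg' hlow hup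
  calc _ = ‖∫ y in δ..L, ((χ y / g y * g y : ℝ) : ℂ) * Complex.exp (φ y * I)‖ := by
        congr 1
        refine intervalIntegral.integral_congr fun y hy ↦ ?_
        rw [Set.uIcc_of_le hL] at hy
        simp only [div_mul_cancel₀ _ (ne y hy)]
    _ ≤ |χ δ / g δ| + |χ L / g L| + ∫ y in δ..L, |(χ' y * g y - χ y * g' y) / g y ^ 2| :=
        norm_integral_mul_deriv_mul_exp_le hL (fun y hy ↦ (hχ y hy).div (hg y hy) (ne y hy))
          deriv_cont hφ (HasDerivAt.continuousOn hg)
    _ ≤ 1 / (l * δ) + 1 / (l * δ) + (c + V) / (l * δ) :=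
        add_le_add_three (quotient_le δ ⟨le_rfl, hL⟩) (quotient_le L ⟨hL, le_rfl⟩) deriv_le
    _ = _ := by ring

lemma integral_comp_mul_deriv_le_integral {F g g' : ℝ → ℝ} (hab : a ≤ b) (hF : Continuous F)
    (hF₀ : ∀ x, 0 ≤ F x) (hF_int : Integrable F)
    (hg : ∀ y ∈ Set.Icc a b, HasDerivAt g (g' y) y) (hg' : ContinuousOn g' (Set.Icc a b))
    (hg_le : g a ≤ g b) : ∫ y in a..b, F (g y) * g' y ≤ ∫ x, F x := by
  rw [← Set.uIcc_of_le hab] at hg hg'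
  have change := intervalIntegral.integral_comp_mul_deriv hg hg' hF
  simp only [Function.comp_apply] at change
  rw [change, intervalIntegral.integral_of_le hg_le]
  exact setIntegral_le_integral hF_int (ae_of_all _ hF₀)

/-- An amplitude on the half-line: bounded by `1`, continuously differentiable away from `0`, and of
total variation at most `V` there. -/
structure IsAmplitude (χ : ℝ → ℝ) (V : ℝ) : Prop where
  continuous : Continuous χ
  abs_le_one : ∀ y, |χ y| ≤ 1
  contDiffOn : ContDiffOn ℝ 1 χ (Set.Ioi 0)
  integral_abs_deriv_le : ∀ a b, 0 < a → a ≤ b → ∫ y in a..b, |deriv χ y| ≤ V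

namespace IsAmplitude

lemma hasDerivAt (h : IsAmplitude χ V) {y : ℝ} (hy : 0 < y) : HasDerivAt χ (deriv χ y) y :=
  ((h.contDiffOn.differentiableOn one_ne_zero).differentiableAt (Ioi_mem_nhds hy)).hasDerivAt

lemma continuousOn_deriv (h : IsAmplitude χ V) : ContinuousOn (deriv χ) (Set.Ioi 0) :=
  h.contDiffOn.continuousOn_deriv_of_isOpen isOpen_Ioi le_rfl

lemma intervalIntegrable_abs_deriv (h : IsAmplitude χ V) (ha : 0 < a) (hab : a ≤ b) :
    IntervalIntegrable (fun y ↦ |deriv χ y|) volume a b :=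
  (h.continuousOn_deriv.mono fun _ hy ↦ ha.trans_le hy.1).abs.intervalIntegrable_of_Icc hab

lemma nonneg (h : IsAmplitude χ V) : 0 ≤ V := by
  simpa using h.integral_abs_deriv_le 1 1 one_pos le_rfl

lemma const {κ : ℝ} (hκ : |κ| ≤ 1) : IsAmplitude (fun _ ↦ κ) 0 where
  continuous := continuous_const
  abs_le_one _ := hκ
  contDiffOn := contDiffOn_const
  integral_abs_deriv_le a b _ _ := by simp

lemma mul {χ₁ χ₂ : ℝ → ℝ} {V₁ V₂ : ℝ} (h₁ : IsAmplitude χ₁ V₁) (h₂ : IsAmplitude χ₂ V₂) :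
    IsAmplitude (fun y ↦ χ₁ y * χ₂ y) (V₁ + V₂) where
  continuous := h₁.continuous.mul h₂.continuous
  abs_le_one y := by
    rw [abs_mul]
    exact mul_le_one₀ (h₁.abs_le_one y) (abs_nonneg _) (h₂.abs_le_one y)
  contDiffOn := h₁.contDiffOn.mul h₂.contDiffOn
  integral_abs_deriv_le a b ha hab := by
    have int₁ := h₁.intervalIntegrable_abs_deriv ha hab
    have int₂ := h₂.intervalIntegrable_abs_deriv ha hab
    have pointwise (y) (hy : 0 < y) :
        |deriv (fun y ↦ χ₁ y * χ₂ y) y| ≤ |deriv χ₁ y| + |deriv χ₂ y| := by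
      rw [((h₁.hasDerivAt hy).fun_mul (h₂.hasDerivAt hy)).deriv]
      refine (abs_add_le _ _).trans ?_
      rw [abs_mul, abs_mul]
      exact add_le_add (mul_le_of_le_one_right (abs_nonneg _) (h₂.abs_le_one y))
        (mul_le_of_le_one_left (abs_nonneg _) (h₁.abs_le_one y))
    have cont : ContinuousOn (deriv fun y ↦ χ₁ y * χ₂ y) (Set.Ioi 0) :=
      (h₁.contDiffOn.mul h₂.contDiffOn).continuousOn_deriv_of_isOpen isOpen_Ioi le_rfl
    calc _ ≤ ∫ y in a..b, (|deriv χ₁ y| + |deriv χ₂ y|) := by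
          refine intervalIntegral.integral_mono_on hab ?_ (int₁.add int₂) fun y hy ↦
            pointwise y (ha.trans_le hy.1)
          exact (cont.mono fun _ hy ↦ ha.trans_le hy.1).abs.intervalIntegrable_of_Icc hab
      _ ≤ V₁ + V₂ := by
          rw [intervalIntegral.integral_add int₁ int₂]
          exact add_le_add (h₁.integral_abs_deriv_le a b ha hab)
            (h₂.integral_abs_deriv_le a b ha hab)

lemma comp {F w : ℝ → ℝ} (hF : ContDiff ℝ 1 F) (hF₁ : ∀ x, |F x| ≤ 1)
    (hF_int : Integrable fun x ↦ |deriv F x|) (hw : Continuous w)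
    (hw_smooth : ContDiffOn ℝ 1 w (Set.Ioi 0)) (hw_mono : MonotoneOn w (Set.Ioi 0)) :
    IsAmplitude (fun y ↦ F (w y)) (∫ x, |deriv F x|) where
  continuous := hF.continuous.comp hw
  abs_le_one y := hF₁ _
  contDiffOn := hF.comp_contDiffOn hw_smooth
  integral_abs_deriv_le a b ha hab := by
    have subset : Set.Icc a b ⊆ Set.Ioi 0 := fun y hy ↦ ha.trans_le hy.1
    have w_deriv (y) (hy : y ∈ Set.Icc a b) : HasDerivAt w (deriv w y) y :=
      ((hw_smooth.differentiableOn one_ne_zero).differentiableAt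
        (Ioi_mem_nhds (subset hy))).hasDerivAt
    calc _ = ∫ y in a..b, |deriv F (w y)| * deriv w y := by
          refine intervalIntegral.integral_congr fun y hy ↦ ?_
          rw [Set.uIcc_of_le hab] at hy
          have w_nonneg : 0 ≤ deriv w y := by
            rw [← derivWithin_of_isOpen isOpen_Ioi (subset hy)]
            exact hw_mono.derivWithin_nonneg
          have chain := ((hF.differentiable one_ne_zero _).hasDerivAt).comp y (w_deriv y hy)
          simp only [Function.comp_def] at chain
          simp only [chain.deriv, abs_mul, abs_of_nonneg w_nonneg]
      _ ≤ ∫ x, |deriv F x| :=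
          integral_comp_mul_deriv_le_integral hab (hF.continuous_deriv le_rfl).abs
            (fun x ↦ abs_nonneg _) hF_int w_deriv
            ((hw_smooth.continuousOn_deriv_of_isOpen isOpen_Ioi le_rfl).mono subset)
            (hw_mono ha (ha.trans_le hab) hab)

end IsAmplitude

/-- The stationary point `0` is cut out at the scale `δ = 1 / √l`. -/
theorem norm_integral_zero_mul_exp_le (hL : 0 ≤ L) (hl : 0 < l) (hc : 0 ≤ c) (hχ : IsAmplitude χ V)
    (hφ : ∀ y, 0 < y → HasDerivAt φ (g y) y) (hφ_cont : Continuous φ)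
    (hg : ∀ y, 0 < y → HasDerivAt g (g' y) y) (hg' : ContinuousOn g' (Set.Ioi 0))
    (hlow : ∀ y, 0 < y → y ≤ L → l * y ≤ |g y|)
    (hup : ∀ y, 0 < y → y * |g' y| ≤ c * |g y|) :
    ‖∫ y in 0..L, (χ y : ℂ) * Complex.exp (φ y * I)‖ ≤ (3 + c + V) / √l := by
  have cont : Continuous fun y ↦ (χ y : ℂ) * Complex.exp (φ y * I) := by
    have := hχ.continuous
    fun_prop
  have trivial_bound (s : ℝ) (hs : 0 ≤ s) :
      ‖∫ y in 0..s, (χ y : ℂ) * Complex.exp (φ y * I)‖ ≤ s := by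
    refine (intervalIntegral.norm_integral_le_of_norm_le_const (C := 1) fun y _ ↦ ?_).trans_eq ?_
    · simpa [Complex.norm_exp_ofReal_mul_I] using hχ.abs_le_one y
    · rw [one_mul, sub_zero, abs_of_nonneg hs]
  have hδ : 0 < 1 / √l := by positivity
  rcases le_total L (1 / √l) with hle | hle
  · refine (trivial_bound L hL).trans (hle.trans ?_)
    gcongr
    linarith [hχ.nonneg]
  · have subset : Set.Icc (1 / √l) L ⊆ Set.Ioi 0 := fun y hy ↦ hδ.trans_le hy.1
    have outer := norm_integral_mul_exp_le_of_mul_le_abs_deriv hδ hle hl hc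
      (fun y hy ↦ hχ.hasDerivAt (subset hy)) (hχ.continuousOn_deriv.mono subset)
      (fun y _ ↦ hχ.abs_le_one y) (hχ.integral_abs_deriv_le _ _ hδ hle)
      (fun y hy ↦ hφ y (subset hy)) (fun y hy ↦ hg y (subset hy)) (hg'.mono subset)
      (fun y hy ↦ hlow y (subset hy) hy.2) (fun y hy ↦ hup y (subset hy))
    rw [← intervalIntegral.integral_add_adjacent_intervals (cont.intervalIntegrable _ (1 / √l))
      (cont.intervalIntegrable _ _)]
    calc _ ≤ 1 / √l + (2 + c + V) / (l * (1 / √l)) :=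
          (norm_add_le _ _).trans (add_le_add (trivial_bound _ hδ.le) outer)
      _ = _ := by
          rw [mul_one_div, Real.div_sqrt]
          ring

end Oscillatory

section RootPhase

variable {A B c e k K L V y : ℝ} {χ : ℝ → ℝ}

/-- Restriction to a line of a phase `√Q₁ ± √Q₂` with `Q₁`, `Q₂` quadratic; `e = ±1` is the sign. -/
def rootPhase (A B c e y : ℝ) : ℝ :=
  √(A + c * y ^ 2) + e * √(B + c * y ^ 2)

lemma hasDerivAt_sqrt_add_mul_sq (h : 0 < A + c * y ^ 2) :
    HasDerivAt (fun y ↦ √(A + c * y ^ 2)) (c * y * (1 / √(A + c * y ^ 2))) y := by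
  have inner : HasDerivAt (fun y ↦ A + c * y ^ 2) (c * (2 * y)) y := by
    simpa using ((hasDerivAt_pow 2 y).const_mul c).const_add A
  refine (inner.sqrt h.ne').congr_deriv ?_
  field_simp

lemma hasDerivAt_one_div_sqrt_add_mul_sq (h : 0 < A + c * y ^ 2) :
    HasDerivAt (fun y ↦ 1 / √(A + c * y ^ 2)) (-(c * y * (1 / √(A + c * y ^ 2)) ^ 3)) y := by
  have hs := Real.sqrt_pos.2 h
  simp_rw [one_div]
  refine ((hasDerivAt_sqrt_add_mul_sq h).fun_inv hs.ne').congr_deriv ?_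
  field_simp

/-- Since `1 / a - 1 / b = (b ^ 2 - a ^ 2) / (a b (a + b))`. -/
lemma abs_sq_sub_sq_div_le_abs_one_div_add {a b : ℝ} (ha : 0 < a) (hb : 0 < b) (haK : a ≤ K)
    (hbK : b ≤ K) (he : e = 1 ∨ e = -1) :
    |a ^ 2 - b ^ 2| / (2 * K ^ 3) ≤ |1 / a + e * (1 / b)| := by
  have hX : 0 < 1 / a := by positivity
  have hY : 0 < 1 / b := by positivity
  have hK : 0 < K := ha.trans_le haK
  have denominator_le : a * b * (a + b) ≤ 2 * K ^ 3 :=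
    calc a * b * (a + b) ≤ K * K * (K + K) := by gcongr
      _ = 2 * K ^ 3 := by ring
  calc |a ^ 2 - b ^ 2| / (2 * K ^ 3) ≤ |a ^ 2 - b ^ 2| / (a * b * (a + b)) := by
        gcongr
    _ = |1 / a - 1 / b| := by
        rw [← abs_of_pos (by positivity : 0 < a * b * (a + b)), ← abs_div, ← abs_neg]
        congr 1
        field_simp
        ring
    _ ≤ |1 / a + e * (1 / b)| := by
        rcases he with rfl | rfl
        · rw [one_mul, abs_of_pos (add_pos hX hY), abs_le]
          constructor <;> linarith
        · rw [neg_one_mul, sub_eq_add_neg]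

/-- `X ^ 3 ± Y ^ 3` factors through `X ± Y`. -/
lemma abs_add_sub_mul_cube_le {X Y s : ℝ} (hX : 0 ≤ X) (hY : 0 ≤ Y) (hsX : s * X ^ 2 ≤ 1)
    (hsY : s * Y ^ 2 ≤ 1) (hs : 0 ≤ s) (he : e = 1 ∨ e = -1) :
    |X + e * Y - s * (X ^ 3 + e * Y ^ 3)| ≤ 4 * |X + e * Y| := by
  have factor : X + e * Y - s * (X ^ 3 + e * Y ^ 3) =
      (1 - s * (X ^ 2 - e * (X * Y) + Y ^ 2)) * (X + e * Y) := by
    rcases he with rfl | rfl <;> ring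
  have hXY : 0 ≤ s * (X * Y) := by positivity
  have hsq : 0 ≤ s * (X - Y) ^ 2 := by positivity
  rw [factor, abs_mul]
  gcongr
  rw [abs_le]
  rcases he with rfl | rfl <;> constructor <;> nlinarith

lemma hasDerivAt_rootPhase (hA : 0 ≤ A) (hB : 0 ≤ B) (hc : 0 < c) (hy : 0 < y) :
    HasDerivAt (rootPhase A B c e)
      (c * y * (1 / √(A + c * y ^ 2) + e * (1 / √(B + c * y ^ 2)))) y := by
  refine ((hasDerivAt_sqrt_add_mul_sq (by positivity)).add
    ((hasDerivAt_sqrt_add_mul_sq (A := B) (by positivity)).const_mul e)).congr_deriv ?_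
  ring

lemma hasDerivAt_deriv_rootPhase (hA : 0 ≤ A) (hB : 0 ≤ B) (hc : 0 < c) (hy : 0 < y) :
    HasDerivAt (fun y ↦ c * y * (1 / √(A + c * y ^ 2) + e * (1 / √(B + c * y ^ 2))))
      (c * (1 / √(A + c * y ^ 2) + e * (1 / √(B + c * y ^ 2)) -
        c * y ^ 2 * ((1 / √(A + c * y ^ 2)) ^ 3 + e * (1 / √(B + c * y ^ 2)) ^ 3))) y := by
  refine (((hasDerivAt_id' y).const_mul c).fun_mul
    ((hasDerivAt_one_div_sqrt_add_mul_sq (A := A) (by positivity)).fun_add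
      ((hasDerivAt_one_div_sqrt_add_mul_sq (A := B) (by positivity)).const_mul e))).congr_deriv ?_
  ring

lemma mul_sq_mul_one_div_sqrt_sq_le (hA : 0 ≤ A) (hc : 0 < c) (hy : 0 < y) :
    c * y ^ 2 * (1 / √(A + c * y ^ 2)) ^ 2 ≤ 1 := by
  rw [div_pow, one_pow, Real.sq_sqrt (by positivity), mul_one_div, div_le_one (by positivity)]
  linarith

lemma abs_sub_div_le_abs_one_div_sqrt_add (hA : 0 ≤ A) (hB : 0 ≤ B) (hc : 0 < c)
    (he : e = 1 ∨ e = -1) (hAK : √(A + c * L ^ 2) ≤ K) (hBK : √(B + c * L ^ 2) ≤ K)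
    (hy : 0 < y) (hyL : y ≤ L) :
    |A - B| / (2 * K ^ 3) ≤ |1 / √(A + c * y ^ 2) + e * (1 / √(B + c * y ^ 2))| := by
  have := abs_sq_sub_sq_div_le_abs_one_div_add (K := K) (a := √(A + c * y ^ 2))
    (b := √(B + c * y ^ 2)) (by positivity) (by positivity)
    (le_trans (by gcongr) hAK) (le_trans (by gcongr) hBK) he
  rwa [Real.sq_sqrt (by positivity), Real.sq_sqrt (by positivity), add_sub_add_right_eq_sub] at this

theorem norm_integral_zero_mul_exp_rootPhase_le (hχ : IsAmplitude χ V) (hA : 0 ≤ A) (hB : 0 ≤ B)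
    (hAB : A ≠ B) (hc : 0 < c) (he : e = 1 ∨ e = -1) (hk : k ≠ 0) (hL : 0 < L)
    (hAK : √(A + c * L ^ 2) ≤ K) (hBK : √(B + c * L ^ 2) ≤ K) :
    ‖∫ y in 0..L, (χ y : ℂ) * Complex.exp ((k * rootPhase A B c e y : ℝ) * I)‖ ≤
      (7 + V) / √(|k| * c * (|A - B| / (2 * K ^ 3))) := by
  have hK : 0 < K := lt_of_lt_of_le (by positivity) hAK
  have root_pos (D : ℝ) (hD : 0 ≤ D) (y : ℝ) (hy : 0 < y) : √(D + c * y ^ 2) ≠ 0 := by positivity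
  have deriv_cont (D : ℝ) (hD : 0 ≤ D) :
      ContinuousOn (fun y ↦ 1 / √(D + c * y ^ 2)) (Set.Ioi 0) :=
    continuousOn_const.div (by fun_prop) (root_pos D hD)
  have bound := norm_integral_zero_mul_exp_le (l := |k| * c * (|A - B| / (2 * K ^ 3))) (c := 4)
    hL.le (by positivity) zero_le_four hχ
    (fun y hy ↦ (hasDerivAt_rootPhase (e := e) hA hB hc hy).const_mul k)
    (by unfold rootPhase; fun_prop)
    (fun y hy ↦ (hasDerivAt_deriv_rootPhase hA hB hc hy).const_mul k)
    (by have := deriv_cont A hA; have := deriv_cont B hB; fun_prop)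
    (fun y hy hyL ↦ ?_) (fun y hy ↦ ?_)
  · refine bound.trans_eq ?_
    norm_num
  · rw [abs_mul, abs_mul, abs_mul, abs_of_pos hc, abs_of_pos hy]
    have := abs_sub_div_le_abs_one_div_sqrt_add hA hB hc he hAK hBK hy hyL
    calc _ = |k| * (c * y * (|A - B| / (2 * K ^ 3))) := by ring
      _ ≤ _ := by gcongr
  · rw [abs_mul, abs_mul, abs_mul, abs_mul, abs_mul, abs_of_pos hc, abs_of_pos hy]
    have := abs_add_sub_mul_cube_le (s := c * y ^ 2) (by positivity) (by positivity)
      (mul_sq_mul_one_div_sqrt_sq_le hA hc hy) (mul_sq_mul_one_div_sqrt_sq_le hB hc hy)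
      (by positivity) he
    calc _ ≤ y * (|k| * (c * (4 * |1 / √(A + c * y ^ 2) + e * (1 / √(B + c * y ^ 2))|))) := by
          gcongr
      _ = _ := by ring

end RootPhase

section Symbol

variable {ψ : ℝ → ℝ} {γ r R ε1 ε2 τ a s p z y : ℝ} {ξ : E3}

lemma norm_pt_sq (p y z : ℝ) : ‖pt p y z‖ ^ 2 = p ^ 2 + y ^ 2 + z ^ 2 := by
  simp [EuclideanSpace.norm_sq_eq, Fin.sum_univ_three, pt]

lemma xih_pt (p y z : ℝ) : xih (pt p y z) = √(p ^ 2 + y ^ 2) := rfl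

lemma xih_eq_sqrt (ξ : E3) : xih ξ = √(‖ξ‖ ^ 2 - ξ 2 ^ 2) := by
  simp [xih, EuclideanSpace.norm_sq_eq, Fin.sum_univ_three]

lemma continuous_pt : Continuous fun y ↦ pt p y z := by
  unfold pt
  fun_prop

lemma isAmplitude_comp_sqrt_add_sq {F : ℝ → ℝ} (hF : ContDiff ℝ 1 F) (hF₁ : ∀ x, |F x| ≤ 1)
    (hF_int : Integrable fun x ↦ |deriv F x|) (ha : 0 ≤ a) (hs : 0 ≤ s) :
    IsAmplitude (fun y ↦ F (√(a + y ^ 2) / s)) (∫ x, |deriv F x|) := by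
  refine .comp (w := fun y ↦ √(a + y ^ 2) / s) hF hF₁ hF_int (by fun_prop) ?_ fun x hx y _ hxy ↦ ?_
  · refine (ContDiffOn.sqrt (by fun_prop) fun y hy ↦ ?_).div_const s
    have : 0 < y := hy
    positivity
  · have : 0 < x := hx
    dsimp only
    gcongr

namespace IsCutoff

lemma contDiff_one (hψ : IsCutoff ψ) : ContDiff ℝ 1 ψ :=
  hψ.1.of_le (by exact_mod_cast le_top)

lemma continuous (hψ : IsCutoff ψ) : Continuous ψ :=
  hψ.1.continuous

lemma abs_le_one (hψ : IsCutoff ψ) (x : ℝ) : |ψ x| ≤ 1 :=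
  abs_le.2 ⟨by linarith [(hψ.2.1 x).1], (hψ.2.1 x).2⟩

lemma abs_one_sub_le_one (hψ : IsCutoff ψ) (x : ℝ) : |1 - ψ x| ≤ 1 :=
  abs_le.2 ⟨by linarith [(hψ.2.1 x).2], by linarith [(hψ.2.1 x).1]⟩

lemma deriv_eq_zero (hψ : IsCutoff ψ) {x : ℝ} (hx : x ∉ Set.Icc 1 2) : deriv ψ x = 0 := by
  rcases not_and_or.1 hx with hx | hx <;> rw [not_le] at hx
  · have : ψ =ᶠ[nhds x] fun _ ↦ 1 := by
      filter_upwards [Iio_mem_nhds hx] with u hu using hψ.2.2.1 u (le_of_lt hu)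
    simp [this.deriv_eq]
  · have : ψ =ᶠ[nhds x] fun _ ↦ 0 := by
      filter_upwards [Ioi_mem_nhds hx] with u hu using hψ.2.2.2 u (le_of_lt hu)
    simp [this.deriv_eq]

lemma integrable_abs_deriv (hψ : IsCutoff ψ) : Integrable fun x ↦ |deriv ψ x| :=
  (hψ.contDiff_one.continuous_deriv le_rfl).abs.integrable_of_hasCompactSupport <|
    HasCompactSupport.intro isCompact_Icc fun _ hx ↦ by rw [hψ.deriv_eq_zero hx, abs_zero]

lemma isAmplitude_Psi (hψ : IsCutoff ψ) (hr : 0 ≤ r) (hR : 0 ≤ R) (p z : ℝ) :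
    IsAmplitude (fun y ↦ Psi ψ r R (pt p y z)) (2 * ∫ x, |deriv ψ x|) := by
  have abs_deriv_one_sub : (fun x ↦ |deriv (fun x ↦ 1 - ψ x) x|) = fun x ↦ |deriv ψ x| := by
    simp
  have radial := isAmplitude_comp_sqrt_add_sq hψ.contDiff_one hψ.abs_le_one hψ.integrable_abs_deriv
    (by positivity : 0 ≤ p ^ 2 + z ^ 2) hR
  have horizontal := isAmplitude_comp_sqrt_add_sq (F := fun x ↦ 1 - ψ x)
    (contDiff_const.sub hψ.contDiff_one) hψ.abs_one_sub_le_one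
    (abs_deriv_one_sub ▸ hψ.integrable_abs_deriv) (sq_nonneg p) hr
  convert radial.mul (horizontal.mul (.const (hψ.abs_one_sub_le_one (|z| / r)))) using 1
  · funext y
    rw [Psi, xih_pt, ← Real.sqrt_sq (norm_nonneg (pt p y z)), norm_pt_sq, add_right_comm]
    rfl
  · rw [abs_deriv_one_sub]
    ring

lemma continuous_Psi (hψ : IsCutoff ψ) : Continuous (Psi ψ r R) := by
  have := hψ.continuous
  unfold Psi xih
  fun_prop

lemma abs_Psi_le_one (hψ : IsCutoff ψ) (ξ : E3) : |Psi ψ r R ξ| ≤ 1 := by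
  rw [Psi, abs_mul, abs_mul]
  exact mul_le_one₀ (hψ.abs_le_one _) (by positivity)
    (mul_le_one₀ (hψ.abs_one_sub_le_one _) (abs_nonneg _) (hψ.abs_one_sub_le_one _))

lemma Psi_eq_zero (hψ : IsCutoff ψ) (hR : 0 < R) (hξ : 2 * R ≤ ‖ξ‖) : Psi ψ r R ξ = 0 := by
  rw [Psi, hψ.2.2.2 _ ((le_div_iff₀ hR).2 hξ), zero_mul]

lemma Psi_eq_zero_of_apply_two (hψ : IsCutoff ψ) (hξ : ξ 2 = 0) : Psi ψ r R ξ = 0 := by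
  simp [Psi, hξ, hψ.2.2.1 0]

end IsCutoff

/-- The symbol `Ψ_{r,R}(ξ) e^{τ λ(ξ)}` of the localised propagator at the rescaled time
`τ = t / ε`. -/
def symbol (ψ : ℝ → ℝ) (r R γ ε1 ε2 τ : ℝ) (ξ : E3) : ℂ :=
  (Psi ψ r R ξ : ℂ) * Complex.exp ((τ : ℂ) * lamEV γ ε1 ε2 ξ)

lemma PsiG_eq_multiplierOp (ψ : ℝ → ℝ) (r R γ ε1 ε2 ε t : ℝ) (f : E3 → ℂ) :
    PsiG ψ r R γ ε1 ε2 ε t f = multiplierOp (symbol ψ r R γ ε1 ε2 (t / ε)) f := rfl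

lemma symbol_eq_mul_exp_mul_I (ψ : ℝ → ℝ) (r R γ ε1 ε2 τ : ℝ) (ξ : E3) :
    symbol ψ r R γ ε1 ε2 τ ξ = (Psi ψ r R ξ : ℂ) * Complex.exp ((τ * ε1 / 2 *
      (√(1 + γ ^ 2 * ‖ξ‖ ^ 2 + 2 * γ * ξ 2) +
        ε2 * √(1 + γ ^ 2 * ‖ξ‖ ^ 2 - 2 * γ * ξ 2)) : ℝ) * I) := by
  rw [symbol, lamEV]
  push_cast
  ring_nf

lemma symbol_pt (ψ : ℝ → ℝ) (r R γ ε1 ε2 τ p y z : ℝ) :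
    symbol ψ r R γ ε1 ε2 τ (pt p y z) = (Psi ψ r R (pt p y z) : ℂ) *
      Complex.exp ((τ * ε1 / 2 * rootPhase ((γ * p) ^ 2 + (1 + γ * z) ^ 2)
        ((γ * p) ^ 2 + (1 - γ * z) ^ 2) (γ ^ 2) ε2 y : ℝ) * I) := by
  rw [symbol_eq_mul_exp_mul_I, norm_pt_sq, rootPhase]
  simp only [pt]
  ring_nf!

lemma symbol_congr {η : E3} (hnorm : ‖ξ‖ = ‖η‖) (h₂ : ξ 2 = η 2) :
    symbol ψ r R γ ε1 ε2 τ ξ = symbol ψ r R γ ε1 ε2 τ η := by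
  simp only [symbol, Psi, lamEV, xih_eq_sqrt, hnorm, h₂]

namespace IsCutoff

lemma norm_symbol_le_one (hψ : IsCutoff ψ) (ξ : E3) : ‖symbol ψ r R γ ε1 ε2 τ ξ‖ ≤ 1 := by
  rw [symbol_eq_mul_exp_mul_I, norm_mul, Complex.norm_exp_ofReal_mul_I, mul_one, Complex.norm_real]
  exact hψ.abs_Psi_le_one ξ

lemma symbol_eq_zero (hψ : IsCutoff ψ) (hR : 0 < R) (hξ : 2 * R ≤ ‖ξ‖) :
    symbol ψ r R γ ε1 ε2 τ ξ = 0 := by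
  rw [symbol, hψ.Psi_eq_zero hR hξ, Complex.ofReal_zero, zero_mul]

lemma symbol_eq_zero_of_apply_two (hψ : IsCutoff ψ) (hξ : ξ 2 = 0) :
    symbol ψ r R γ ε1 ε2 τ ξ = 0 := by
  rw [symbol, hψ.Psi_eq_zero_of_apply_two hξ, Complex.ofReal_zero, zero_mul]

lemma continuous_symbol (hψ : IsCutoff ψ) : Continuous (symbol ψ r R γ ε1 ε2 τ) := by
  have := hψ.continuous_Psi (r := r) (R := R)
  unfold symbol lamEV
  fun_prop

lemma integrable_symbol (hψ : IsCutoff ψ) (hR : 0 < R) : Integrable (symbol ψ r R γ ε1 ε2 τ) :=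
  hψ.continuous_symbol.integrable_of_hasCompactSupport <|
    HasCompactSupport.intro (isCompact_closedBall 0 (2 * R)) fun ξ hξ ↦
      hψ.symbol_eq_zero hR (by simpa using (not_le.1 (mt mem_closedBall_zero_iff.2 hξ)).le)

lemma norm_fourierInv_symbol_le (hψ : IsCutoff ψ) (hR : 0 < R) (x : E3) :
    ‖𝓕⁻ (symbol ψ r R γ ε1 ε2 τ) x‖ ≤ 8 * volume.real (Metric.ball (0 : E3) 1) * R ^ 3 := by
  have support_subset : ∀ ξ ∉ Metric.closedBall (0 : E3) (2 * R),
      Real.fourierChar (inner ℝ ξ x) • symbol ψ r R γ ε1 ε2 τ ξ = 0 := fun ξ hξ ↦ by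
    rw [hψ.symbol_eq_zero hR (by simpa using (not_le.1 (mt mem_closedBall_zero_iff.2 hξ)).le),
      smul_zero]
  have volume_closedBall : volume.real (Metric.closedBall (0 : E3) (2 * R)) =
      8 * volume.real (Metric.ball (0 : E3) 1) * R ^ 3 := by
    rw [Measure.addHaar_real_closedBall _ _ (by positivity), finrank_euclideanSpace,
      Fintype.card_fin]
    ring
  rw [Real.fourierInv_eq, ← setIntegral_eq_integral_of_forall_compl_eq_zero support_subset,
    ← volume_closedBall, ← one_mul (volume.real _)]
  refine norm_setIntegral_le_of_norm_le_const measure_closedBall_lt_top fun ξ _ ↦ ?_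
  rw [Circle.norm_smul]
  exact hψ.norm_symbol_le_one ξ

end IsCutoff

end Symbol

section Kernel

variable {ψ : ℝ → ℝ} {γ r R ε1 ε2 τ L p z : ℝ}

lemma integral_neg_of_even {E : Type*} [NormedAddCommGroup E] [NormedSpace ℝ E] {f : ℝ → E}
    (hf : IntervalIntegrable f volume (-L) L) (hf_even : ∀ y, f (-y) = f y) :
    ∫ y in -L..L, f y = (2 : ℝ) • ∫ y in 0..L, f y := by
  have zero_mem : (0 : ℝ) ∈ Set.uIcc (-L) L := by
    rcases le_total 0 L with h | h <;> simp [h]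
  have reflect : ∫ y in -L..0, f y = ∫ y in 0..L, f y := by
    simpa [hf_even] using (intervalIntegral.integral_comp_neg (a := 0) (b := L) f).symm
  rw [← intervalIntegral.integral_add_adjacent_intervals
    (hf.mono_set (Set.uIcc_subset_uIcc_left zero_mem))
    (hf.mono_set (Set.uIcc_subset_uIcc_right zero_mem)), reflect, two_smul]

lemma intervalIntegrable_abs_rpow {s : ℝ} (hs : -1 < s) (a b : ℝ) :
    IntervalIntegrable (fun x : ℝ ↦ |x| ^ s) volume a b := by
  have := (intervalIntegral.intervalIntegrable_cpow' (a := a) (b := b) (r := s) (by simpa)).norm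
  simpa [Complex.norm_cpow_real] using this

lemma integral_abs_rpow {s : ℝ} (hs : -1 < s) (hL : 0 ≤ L) :
    ∫ x in -L..L, |x| ^ s = 2 * (L ^ (s + 1) / (s + 1)) := by
  have half : ∫ x in 0..L, |x| ^ s = ∫ x in 0..L, x ^ s :=
    intervalIntegral.integral_congr fun x hx ↦ by
      rw [Set.uIcc_of_le hL] at hx
      simp only [abs_of_nonneg hx.1]
  rw [integral_neg_of_even (intervalIntegrable_abs_rpow hs _ _) (by simp), half,
    integral_rpow (.inl hs), Real.zero_rpow (by linarith), sub_zero, smul_eq_mul]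

lemma integral_eq_integral_integral_pt {F : Type*} [NormedAddCommGroup F] [NormedSpace ℝ F]
    {f : E3 → F} (hf : Integrable f) : ∫ ξ, f ξ = ∫ w : ℝ × ℝ, ∫ y, f (pt w.1 y w.2) := by
  let e : E3 ≃ᵐ ℝ × (ℝ × ℝ) := ((MeasurableEquiv.toLp 2 (Fin 3 → ℝ)).symm.trans
    (MeasurableEquiv.piFinSuccAbove (fun _ ↦ ℝ) 1)).trans
      (MeasurableEquiv.prodCongr (MeasurableEquiv.refl ℝ) MeasurableEquiv.finTwoArrow)
  have he : MeasurePreserving e volume volume :=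
    ((MeasurePreserving.id (volume : Measure ℝ)).prod (volume_preserving_finTwoArrow ℝ)).comp
      ((volume_preserving_piFinSuccAbove (fun _ ↦ ℝ) 1).comp
        (EuclideanSpace.volume_preserving_symm_measurableEquiv_toLp (Fin 3)))
  have hfe : f = (fun u : ℝ × (ℝ × ℝ) ↦ f (pt u.2.1 u.1 u.2.2)) ∘ e := by
    funext ξ
    refine congrArg f (PiLp.ext fun i ↦ ?_)
    fin_cases i <;> rfl
  have integrable_slices : Integrable (fun u : ℝ × (ℝ × ℝ) ↦ f (pt u.2.1 u.1 u.2.2)) :=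
    (he.integrable_comp_emb e.measurableEmbedding).1 (hfe ▸ hf)
  calc ∫ ξ, f ξ = ∫ ξ, ((fun u : ℝ × (ℝ × ℝ) ↦ f (pt u.2.1 u.1 u.2.2)) ∘ e) ξ := by rw [← hfe]
    _ = ∫ u : ℝ × (ℝ × ℝ), f (pt u.2.1 u.1 u.2.2) :=
        he.integral_comp e.measurableEmbedding fun u ↦ f (pt u.2.1 u.1 u.2.2)
    _ = ∫ w : ℝ × ℝ, ∫ y, f (pt w.1 y w.2) := integral_prod_symm _ integrable_slices

lemma norm_fourierInv_le_integral_norm_integral_pt {m : E3 → ℂ} (hm : Integrable m) {x : E3}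
    (hx : x 1 = 0) : ‖𝓕⁻ m x‖ ≤ ∫ w : ℝ × ℝ, ‖∫ y, m (pt w.1 y w.2)‖ := by
  have inner_pt (p y z : ℝ) : inner ℝ (pt p y z) x = p * x 0 + z * x 2 := by
    simp [pt, PiLp.inner_apply, Fin.sum_univ_three, hx, mul_comm]
  rw [Real.fourierInv_eq, integral_eq_integral_integral_pt (integrable_fourierChar_smul hm x)]
  refine (norm_integral_le_integral_norm _).trans_eq (integral_congr_ae (ae_of_all _ fun w ↦ ?_))
  simp only [inner_pt, Circle.smul_def, integral_smul, norm_smul, Circle.norm_coe, one_mul]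

lemma exists_linearIsometryEquiv_apply_one_eq_zero (x : E3) :
    ∃ A : E3 ≃ₗᵢ[ℝ] E3, (∀ ξ, (A ξ) 2 = ξ 2) ∧ (A x) 1 = 0 := by
  set w := pt (xih x) 0 (x 2) with hw
  have norm_eq : ‖x‖ = ‖w‖ := by
    rw [← sq_eq_sq₀ (norm_nonneg _) (norm_nonneg _), norm_pt_sq, xih, Real.sq_sqrt (by positivity)]
    simp [EuclideanSpace.norm_sq_eq, Fin.sum_univ_three]
  refine ⟨(Submodule.span ℝ {x - w})ᗮ.reflection, fun ξ ↦ ?_, ?_⟩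
  · rw [Submodule.reflection_orthogonal_apply, Submodule.reflection_singleton_apply]
    simp [hw, pt]
  · rw [Submodule.reflection_sub norm_eq]
    rfl

lemma sqrt_add_sq_mul_sq_le (hγ : 0 ≤ γ) (hR : 0 ≤ R) (hp : |p| ≤ 2 * R) (hz : |z| ≤ 2 * R) :
    √((γ * p) ^ 2 + (1 + γ * z) ^ 2 + γ ^ 2 * (2 * R) ^ 2) ≤ 1 + 4 * γ * R := by
  have sq_le {x : ℝ} (hx : |x| ≤ 2 * R) : γ ^ 2 * x ^ 2 ≤ γ ^ 2 * (2 * R) ^ 2 := by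
    rw [← sq_abs x]
    gcongr
  have hz1 : γ * z ≤ γ * (2 * R) := by gcongr; exact (le_abs_self z).trans hz
  refine Real.sqrt_le_iff.2 ⟨by positivity, ?_⟩
  nlinarith [mul_nonneg hγ hR, sq_le hp, sq_le hz]

namespace IsCutoff

lemma integral_symbol_pt (hψ : IsCutoff ψ) (hR : 0 < R) (p z : ℝ) :
    ∫ y, symbol ψ r R γ ε1 ε2 τ (pt p y z) =
      2 * ∫ y in 0..2 * R, symbol ψ r R γ ε1 ε2 τ (pt p y z) := by
  set F := fun y ↦ symbol ψ r R γ ε1 ε2 τ (pt p y z)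
  have F_cont : Continuous F := hψ.continuous_symbol.comp continuous_pt
  have F_even (y : ℝ) : F (-y) = F y := by
    refine symbol_congr ?_ rfl
    rw [← sq_eq_sq₀ (norm_nonneg _) (norm_nonneg _), norm_pt_sq, norm_pt_sq, neg_sq]
  have F_zero (y : ℝ) (hy : 2 * R ≤ |y|) : F y = 0 :=
    hψ.symbol_eq_zero hR (hy.trans (PiLp.norm_apply_le (pt p y z) 1))
  have support_subset : Function.support F ⊆ Set.Ioc (-(2 * R)) (2 * R) := fun y hy ↦ by
    have := abs_lt.1 (not_le.1 fun h ↦ hy (F_zero y h))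
    exact ⟨this.1, this.2.le⟩
  rw [← intervalIntegral.integral_eq_integral_of_support_subset support_subset,
    integral_neg_of_even (F_cont.intervalIntegrable _ _) F_even, Complex.real_smul,
    Complex.ofReal_ofNat]

lemma norm_integral_symbol_pt_le (hψ : IsCutoff ψ) (hγ : 0 < γ) (hr : 0 ≤ r) (hR : 0 < R)
    (hε1 : ε1 = 1 ∨ ε1 = -1) (hε2 : ε2 = 1 ∨ ε2 = -1) (hτ : 0 < τ) (hp : |p| ≤ 2 * R)
    (hz : |z| ≤ 2 * R) (hz₀ : z ≠ 0) :
    ‖∫ y, symbol ψ r R γ ε1 ε2 τ (pt p y z)‖ ≤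
      2 * ((7 + 2 * ∫ x, |deriv ψ x|) / √(τ * (γ / (1 + 4 * γ * R)) ^ 3 * |z|)) := by
  have abs_k : |τ * ε1 / 2| = τ / 2 := by
    rcases hε1 with rfl | rfl <;> simp [abs_div, abs_of_pos hτ]
  have sub_eq : ((γ * p) ^ 2 + (1 + γ * z) ^ 2) - ((γ * p) ^ 2 + (1 - γ * z) ^ 2) = 4 * γ * z := by
    ring
  have half_line := norm_integral_zero_mul_exp_rootPhase_le (hψ.isAmplitude_Psi hr hR.le p z)
    (A := (γ * p) ^ 2 + (1 + γ * z) ^ 2) (B := (γ * p) ^ 2 + (1 - γ * z) ^ 2) (c := γ ^ 2)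
    (k := τ * ε1 / 2) (L := 2 * R) (K := 1 + 4 * γ * R) (by positivity) (by positivity)
    (sub_ne_zero.1 (by rw [sub_eq]; positivity)) (by positivity) hε2
    (abs_pos.1 (by rw [abs_k]; positivity)) (by positivity)
    (sqrt_add_sq_mul_sq_le hγ.le hR.le hp hz)
    (by simpa [sub_eq_add_neg] using
      sqrt_add_sq_mul_sq_le (z := -z) hγ.le hR.le hp (by rwa [abs_neg]))
  have rate_eq : |τ * ε1 / 2| * γ ^ 2 * (|4 * γ * z| / (2 * (1 + 4 * γ * R) ^ 3)) =
      τ * (γ / (1 + 4 * γ * R)) ^ 3 * |z| := by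
    rw [abs_k, abs_mul, abs_of_pos (by positivity : 0 < 4 * γ)]
    field_simp
    norm_num
  rw [hψ.integral_symbol_pt hR, norm_mul, Complex.norm_ofNat]
  simp_rw [symbol_pt]
  rw [sub_eq, rate_eq] at half_line
  gcongr

lemma norm_integral_symbol_pt_le_indicator (hψ : IsCutoff ψ) (hγ : 0 < γ) (hr : 0 ≤ r) (hR : 0 < R)
    (hε1 : ε1 = 1 ∨ ε1 = -1) (hε2 : ε2 = 1 ∨ ε2 = -1) (hτ : 0 < τ) (p z : ℝ) :
    ‖∫ y, symbol ψ r R γ ε1 ε2 τ (pt p y z)‖ ≤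
      (Set.Ioc (-(2 * R)) (2 * R)).indicator
        (fun _ ↦ 2 * (7 + 2 * ∫ x, |deriv ψ x|) / √(τ * (γ / (1 + 4 * γ * R)) ^ 3)) p *
      (Set.Ioc (-(2 * R)) (2 * R)).indicator (fun z ↦ |z| ^ (-(1 / 2) : ℝ)) z := by
  have abs_le_of_mem {x : ℝ} (hx : x ∈ Set.Ioc (-(2 * R)) (2 * R)) : |x| ≤ 2 * R :=
    abs_le.2 ⟨hx.1.le, hx.2⟩
  have slice_eq_zero {x : ℝ} (hx : x ∉ Set.Ioc (-(2 * R)) (2 * R)) (i : Fin 3)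
      (hi : ∀ y, pt p y z i = x) : ∫ y, symbol ψ r R γ ε1 ε2 τ (pt p y z) = 0 := by
    have le_abs : 2 * R ≤ |x| := not_lt.1 fun h ↦ hx ⟨(abs_lt.1 h).1, (abs_lt.1 h).2.le⟩
    refine integral_eq_zero_of_ae (ae_of_all _ fun y ↦ hψ.symbol_eq_zero hR (le_abs.trans ?_))
    exact hi y ▸ PiLp.norm_apply_le (pt p y z) i
  by_cases hp : p ∈ Set.Ioc (-(2 * R)) (2 * R)
  swap
  · rw [Set.indicator_of_notMem hp, slice_eq_zero hp 0 fun _ ↦ rfl, norm_zero, zero_mul]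
  by_cases hz : z ∈ Set.Ioc (-(2 * R)) (2 * R)
  swap
  · rw [Set.indicator_of_notMem hz, slice_eq_zero hz 2 fun _ ↦ rfl, norm_zero, mul_zero]
  rw [Set.indicator_of_mem hp, Set.indicator_of_mem hz]
  rcases eq_or_ne z 0 with rfl | hz₀
  · have slice_zero (y : ℝ) : symbol ψ r R γ ε1 ε2 τ (pt p y 0) = 0 :=
      hψ.symbol_eq_zero_of_apply_two rfl
    simp [slice_zero]
  refine (hψ.norm_integral_symbol_pt_le hγ hr hR hε1 hε2 hτ (abs_le_of_mem hp) (abs_le_of_mem hz)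
    hz₀).trans_eq ?_
  rw [Real.sqrt_mul (by positivity), Real.rpow_neg (abs_nonneg z), ← Real.sqrt_eq_rpow]
  field_simp

theorem norm_fourierInv_symbol_le_div_sqrt (hψ : IsCutoff ψ) (hγ : 0 < γ) (hr : 0 ≤ r) (hR : 0 < R)
    (hε1 : ε1 = 1 ∨ ε1 = -1) (hε2 : ε2 = 1 ∨ ε2 = -1) (hτ : 0 < τ) (x : E3) :
    ‖𝓕⁻ (symbol ψ r R γ ε1 ε2 τ) x‖ ≤
      32 * (7 + 2 * ∫ x, |deriv ψ x|) * (R * √(2 * R)) / √(τ * (γ / (1 + 4 * γ * R)) ^ 3) := by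
  obtain ⟨A, hA₂, hA₁⟩ := exists_linearIsometryEquiv_apply_one_eq_zero x
  have symbol_comp : symbol ψ r R γ ε1 ε2 τ ∘ A = symbol ψ r R γ ε1 ε2 τ :=
    funext fun ξ ↦ symbol_congr (A.norm_map ξ) (hA₂ ξ)
  set D := 2 * (7 + 2 * ∫ x, |deriv ψ x|) / √(τ * (γ / (1 + 4 * γ * R)) ^ 3) with hD
  set J := Set.Ioc (-(2 * R)) (2 * R)
  have volume_J : volume.real J = 4 * R := by
    rw [Real.volume_real_Ioc_of_le (by linarith)]
    ring
  have integrable_const : Integrable (J.indicator fun _ ↦ D) :=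
    (integrable_indicator_iff measurableSet_Ioc).2 (integrableOn_const (by simp))
  have integrable_rpow : Integrable (J.indicator fun z : ℝ ↦ |z| ^ (-(1 / 2) : ℝ)) :=
    (integrable_indicator_iff measurableSet_Ioc).2
      (intervalIntegrable_abs_rpow (by norm_num) _ _).1
  have integral_rpow : ∫ z in J, |z| ^ (-(1 / 2) : ℝ) = 4 * √(2 * R) := by
    rw [← intervalIntegral.integral_of_le (by linarith),
      integral_abs_rpow (by norm_num) (by positivity), Real.sqrt_eq_rpow]
    norm_num
    ring
  calc ‖𝓕⁻ (symbol ψ r R γ ε1 ε2 τ) x‖ = ‖𝓕⁻ (symbol ψ r R γ ε1 ε2 τ) (A x)‖ := by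
        rw [← Real.fourierInv_comp_linearIsometry, symbol_comp]
    _ ≤ ∫ w : ℝ × ℝ, ‖∫ y, symbol ψ r R γ ε1 ε2 τ (pt w.1 y w.2)‖ :=
        norm_fourierInv_le_integral_norm_integral_pt (hψ.integrable_symbol hR) hA₁
    _ ≤ ∫ w : ℝ × ℝ, J.indicator (fun _ ↦ D) w.1 * J.indicator (fun z ↦ |z| ^ (-(1 / 2) : ℝ)) w.2 :=
        integral_mono_of_nonneg (ae_of_all _ fun _ ↦ norm_nonneg _)
          (integrable_const.mul_prod integrable_rpow) (ae_of_all _ fun w ↦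
            hψ.norm_integral_symbol_pt_le_indicator hγ hr hR hε1 hε2 hτ w.1 w.2)
    _ = 4 * R * D * (4 * √(2 * R)) := by
        rw [Measure.volume_eq_prod, integral_prod_mul, integral_indicator measurableSet_Ioc,
          integral_indicator measurableSet_Ioc, integral_rpow, setIntegral_const, volume_J,
          smul_eq_mul]
    _ = _ := by
        rw [hD]
        ring

end IsCutoff

end Kernel

section Dispersive

variable {ψ : ℝ → ℝ} {γ r R ε1 ε2 τ s : ℝ}

lemma mul_sqrt_div_sqrt_le (hγ : 0 < γ) (hR : 0 < R) (hτ : 0 < τ) :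
    R * √(2 * R) / √(τ * (γ / (1 + 4 * γ * R)) ^ 3) ≤
      √(2 * ((1 + 4 * γ) / γ) ^ 3) * ((R * max 1 R) ^ (3 / 2 : ℝ) * τ⁻¹ ^ (1 / 2 : ℝ)) := by
  have K_le : 1 + 4 * γ * R ≤ (1 + 4 * γ) * max 1 R :=
    calc 1 + 4 * γ * R ≤ max 1 R + 4 * γ * max 1 R := by gcongr <;> simp
      _ = (1 + 4 * γ) * max 1 R := by ring
  have rpow_eq : (R * max 1 R) ^ (3 / 2 : ℝ) = √((R * max 1 R) ^ 3) := by
    rw [Real.sqrt_eq_rpow, ← Real.rpow_natCast_mul (by positivity)]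
    norm_num
  rw [← Real.sqrt_eq_rpow, rpow_eq, ← Real.sqrt_sq hR.le, ← Real.sqrt_mul (by positivity),
    ← Real.sqrt_div (by positivity), ← Real.sqrt_mul (by positivity),
    ← Real.sqrt_mul (by positivity), Real.sqrt_sq hR.le]
  refine Real.sqrt_le_sqrt ?_
  calc R ^ 2 * (2 * R) / (τ * (γ / (1 + 4 * γ * R)) ^ 3)
      = 2 * R ^ 3 / (τ * γ ^ 3) * (1 + 4 * γ * R) ^ 3 := by field_simp
    _ ≤ 2 * R ^ 3 / (τ * γ ^ 3) * ((1 + 4 * γ) * max 1 R) ^ 3 := by gcongr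
    _ = _ := by field_simp

theorem exists_norm_fourierInv_symbol_le (hγ : 0 < γ) (hψ : IsCutoff ψ) :
    ∃ C, 1 ≤ C ∧ ∀ r R τ : ℝ, 0 < r → 0 < R → 0 < τ → ∀ ε1 ε2 : ℝ, (ε1 = 1 ∨ ε1 = -1) →
      (ε2 = 1 ∨ ε2 = -1) → ∀ x, ‖𝓕⁻ (symbol ψ r R γ ε1 ε2 τ) x‖ ≤
        C * min (R ^ 3) ((R * max 1 R) ^ (3 / 2 : ℝ) * τ⁻¹ ^ (1 / 2 : ℝ)) := by
  set C₁ := 8 * volume.real (Metric.ball (0 : E3) 1)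
  set C₂ := 32 * (7 + 2 * ∫ x, |deriv ψ x|) * √(2 * ((1 + 4 * γ) / γ) ^ 3)
  have hC₁ : 0 ≤ C₁ := by positivity
  have hC₂ : 0 ≤ C₂ := by positivity
  refine ⟨1 + C₁ + C₂, by linarith, fun r R τ hr hR hτ ε1 ε2 hε1 hε2 x ↦ ?_⟩
  rw [mul_min_of_nonneg _ _ (by positivity)]
  refine le_min ?_ ?_
  · refine (hψ.norm_fourierInv_symbol_le hR x).trans ?_
    gcongr
    linarith
  · calc ‖𝓕⁻ (symbol ψ r R γ ε1 ε2 τ) x‖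
      _ ≤ 32 * (7 + 2 * ∫ x, |deriv ψ x|) * (R * √(2 * R) / √(τ * (γ / (1 + 4 * γ * R)) ^ 3)) := by
        rw [← mul_div_assoc]
        exact hψ.norm_fourierInv_symbol_le_div_sqrt hγ hr.le hR hε1 hε2 hτ x
      _ ≤ C₂ * ((R * max 1 R) ^ (3 / 2 : ℝ) * τ⁻¹ ^ (1 / 2 : ℝ)) := by
        rw [mul_assoc _ √_]
        gcongr
        exact mul_sqrt_div_sqrt_le hγ hR hτ
      _ ≤ _ := by
        gcongr
        linarith

theorem dispersive_interpolated_general (γ : ℝ) (hγ : 0 < γ) (ψ : ℝ → ℝ) (hψ : IsCutoff ψ) :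
    ∃ C : ℝ, 0 < C ∧
      ∀ q qbar : ℝ≥0∞, 2 ≤ q → 1 / q + 1 / qbar = 1 →
      ∀ r R ε : ℝ, 0 < r → 0 < R → 0 < ε →
      ∀ ε1 ε2 : ℝ, (ε1 = 1 ∨ ε1 = -1) → (ε2 = 1 ∨ ε2 = -1) →
      ∀ t : ℝ, 0 < t →
      ∀ f : E3 → ℂ, MemLp f qbar volume →
        eLpNorm (PsiG ψ r R γ ε1 ε2 ε t f) q volume ≤
          ENNReal.ofReal (C * min (R ^ 3) ((R * max 1 R) ^ (3 / 2 : ℝ) * (ε / t) ^ (1 / 2 : ℝ))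
              ^ (1 - 2 / q.toReal)) * eLpNorm f qbar volume := by
  obtain ⟨C, hC, kernel_le⟩ := exists_norm_fourierInv_symbol_le hγ hψ
  refine ⟨2 * C, by positivity, fun q qbar hq hqq r R ε hr hR hε ε1 ε2 hε1 hε2 t ht f hf ↦ ?_⟩
  set B := min (R ^ 3) ((R * max 1 R) ^ (3 / 2 : ℝ) * (ε / t) ^ (1 / 2 : ℝ))
  have hB₀ : 0 ≤ B := le_min (by positivity) (by positivity)
  have hpq : qbar.HolderConjugate q :=
    ENNReal.holderConjugate_iff.2 (by rw [add_comm, ← one_div, ← one_div, hqq])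
  have exponent_le : 1 - 2 / q.toReal ≤ 1 := sub_le_self _ (by positivity)
  rw [PsiG_eq_multiplierOp]
  refine (eLpNorm_multiplierOp_le (M₁ := ⟨C * B, by positivity⟩) (M₂ := 1)
    (hψ.integrable_symbol hR) ?_ hψ.norm_symbol_le_one hpq hq hf).trans ?_
  · have := kernel_le r R (t / ε) hr hR (by positivity) ε1 ε2 hε1 hε2
    rwa [inv_div] at this
  rw [← ENNReal.ofReal_coe_nnreal]
  gcongr
  rw [NNReal.one_rpow, mul_one]
  calc 2 * (C * B) ^ (1 - 2 / q.toReal)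
      = 2 * C ^ (1 - 2 / q.toReal) * B ^ (1 - 2 / q.toReal) := by
        rw [Real.mul_rpow (by positivity) hB₀, mul_assoc]
    _ ≤ 2 * C * B ^ (1 - 2 / q.toReal) := by
        gcongr
        exact Real.rpow_le_self_of_one_le hC exponent_le

lemma min_le_cube_mul_min (hr : 0 < r) (hr₁ : r ≤ 1) (hR : 1 ≤ R) (hs : 0 ≤ s) :
    min (R ^ 3) ((R * max 1 R) ^ (3 / 2 : ℝ) * s) ≤ R ^ 3 * min 1 (r ^ (-(2 : ℝ)) * s) := by
  have rpow_eq : (R * max 1 R) ^ (3 / 2 : ℝ) = R ^ 3 := by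
    rw [max_eq_right hR, ← sq, ← Real.rpow_natCast_mul (by positivity)]
    rw [← Real.rpow_natCast R 3]
    norm_num
  rw [rpow_eq, mul_min_of_nonneg _ _ (by positivity), mul_one]
  gcongr
  exact le_mul_of_one_le_left hs (Real.one_le_rpow_of_pos_of_le_one_of_nonpos hr hr₁ (by norm_num))

lemma two_div_toReal_le_one {q : ℝ≥0∞} (hq : 2 ≤ q) : 2 / q.toReal ≤ 1 := by
  rcases eq_or_ne q ⊤ with rfl | hq_top
  · simp
  · exact div_le_one_of_le₀ (ENNReal.toReal_mono hq_top hq) ENNReal.toReal_nonneg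

end Dispersive

/-- For `q ∈ [2,∞]`, `q̄ ∈ [1,2]` with `1/q + 1/q̄ = 1`:
`‖Ψ_{r,R}(D)G_λ(t)f‖_{L^q} ≤ C [R³ min{1, r^{−2}(ε/t)^{1/2}}]^{1−2/q} ‖f‖_{L^q̄}`,
with `C` depending only on `γ̄` and `ψ`. -/
theorem dispersive_interpolated (γ : ℝ) (hγ : 0 < γ) (ψ : ℝ → ℝ) (hψ : IsCutoff ψ) :
    ∃ C : ℝ, 0 < C ∧
      ∀ q qbar : ℝ≥0∞, 2 ≤ q → 1 ≤ qbar → qbar ≤ 2 → 1/q + 1/qbar = 1 →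
      ∀ r R ε : ℝ, 0 < r → r ≤ 1 → 1 ≤ R → 0 < ε →
      ∀ ε1 ε2 : ℝ, (ε1 = 1 ∨ ε1 = -1) → (ε2 = 1 ∨ ε2 = -1) →
      ∀ t : ℝ, 0 < t →
      ∀ f : E3 → ℂ, MemLp f qbar volume →
        eLpNorm (PsiG ψ r R γ ε1 ε2 ε t f) q volume ≤
          ENNReal.ofReal (C * (R ^ 3 * min 1 (r ^ (-(2:ℝ)) * (ε / t) ^ ((1:ℝ)/2)))
              ^ (1 - 2 / q.toReal)) * eLpNorm f qbar volume := by
  obtain ⟨C, hC, bound⟩ := dispersive_interpolated_general γ hγ ψ hψ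
  refine ⟨C, hC, fun q qbar hq _ _ hqq r R ε hr hr₁ hR hε ε1 ε2 hε1 hε2 t ht f hf ↦
    (bound q qbar hq hqq r R ε hr (one_pos.trans_le hR) hε ε1 ε2 hε1 hε2 t ht f hf).trans ?_⟩
  have exponent_nonneg : 0 ≤ 1 - 2 / q.toReal := sub_nonneg.2 (two_div_toReal_le_one hq)
  gcongr
  exact min_le_cube_mul_min hr hr₁ hR (by positivity)
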